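/- Let p > 0, let λ be a Koshliakov sequence for p, and let x > 0. Then −∑_{n=1}^∞ w_n/(e^{λ_n² x} + 1) = 1/(4(1 + 1/(πp))) + (1/2)·√(π/x)·(√2 − 1)·ζ(1/2) + √(π/(2x))·∑_{n=1}^∞ G_p(π(2n−1)/x)/√(2n−1). -/

import Mathlib

/-!
The numbers `0, ±λ_n` are exactly the zeros of the entire function `ksin p z = p sin πz + z cos πz`,
and they are simple. With `kcos p z = π (p cos πz - z sin πz)` the quotient `kcos / ksin` plays the
role of `π cot πz`: its residue at `λ_n` is the weight `w_n` (`residue_lam`), and it tends to `-iπ`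
exponentially fast in the upper half-plane (`norm_kcot_add_le`), because
`kcos / ksin + iπ = 2πi q (p + iz) / (q (p + iz) - (p - iz))` with `q = e^{2πiz}`.

Put `gden x z = e^{x z²} + 1`. Its zeros are `(±1 ± i) b_j` with `2 x b_j² = π (2j + 1)`. The residue
theorem for `kcos / (ksin · gden)` on `[-N, N] × [-H, H]`, where `x H² = π M` keeps the horizontal
edges away from these zeros, expresses `∑ w_n / (e^{x λ_n²} + 1)` through the poles `(±1 ± i) b_j`
and boundary integrals (`rectInt_full`). The integrand is odd, so only the top and right edges
matter. On the top edge `kcos / ksin` is replaced by `-iπ`, and the remaining integral of `1 / gden`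
is moved down to the real axis, again by residues (`rectInt_upper`). Each pole at height `b_j` then
contributes `kcos / ksin + iπ` times the residue of `1 / gden`, and the two of them add up to
the `j`-th term of the `Gfun` series (`poleTerm_add`). This is `finite_identity`. Its remainder
vanishes when first `N → ∞` and then `M → ∞` (`abs_partial_le`, `tsum_gTerm`).

The real integral left over is `∫₀^∞ dt / (e^{x t²} + 1)`. It is a Mellin transform of `1 / (e^t + 1)`
at `s = 1/2`, equal to `Γ(s) (1 - 2^{1-s}) ζ(s)` for `Re s > 1` by the alternating zeta series, and for
`Re s > 0` by analytic continuation (`integral_fermi_sq`). The pole of `kcos / ksin` at `0` produces the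
constant `1 / (4 (1 + 1/(πp)))`.
-/

/-- The explicit elementary function `G_p(a)` from Ramanujan's formula for `ζ(1/2)`
in Koshliakov's setting. -/
noncomputable def Gfun (p a : ℝ) : ℝ :=
  ((p ^ 2 - a) * (Real.cos (Real.pi * Real.sqrt (2 * a)) - Real.sin (Real.pi * Real.sqrt (2 * a)))
      - Real.exp (-(Real.pi * Real.sqrt (2 * a))) * (p ^ 2 - Real.sqrt (2 * a) * p + a)
      - Real.sqrt (2 * a) * p *
          (Real.cos (Real.pi * Real.sqrt (2 * a)) + Real.sin (Real.pi * Real.sqrt (2 * a)))) /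
    (p ^ 2 * (Real.cosh (Real.pi * Real.sqrt (2 * a)) - Real.cos (Real.pi * Real.sqrt (2 * a)))
      + Real.sqrt (2 * a) * p *
          (Real.sinh (Real.pi * Real.sqrt (2 * a)) + Real.sin (Real.pi * Real.sqrt (2 * a)))
      + a * (Real.cosh (Real.pi * Real.sqrt (2 * a)) + Real.cos (Real.pi * Real.sqrt (2 * a)))) 

section Helpers

open Complex Set Filter Topology MeasureTheory

/-! ### Residue theorem on rectangles -/

/-- Counterclockwise boundary integral over the rectangle `[a, b] × [c, d]`. -/
noncomputable def rectInt (f : ℂ → ℂ) (a b c d : ℝ) : ℂ :=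
  (∫ t in a..b, f (t + c * I)) - (∫ t in a..b, f (t + d * I))
    + I * (∫ y in c..d, f (b + y * I)) - I * (∫ y in c..d, f (a + y * I))

/-- The closed edges of the rectangle `[a, b] × [c, d]`. -/
def rectBdry (a b c d : ℝ) : Set ℂ :=
  {z | (a ≤ z.re ∧ z.re ≤ b ∧ c ≤ z.im ∧ z.im ≤ d) ∧
    (z.re = a ∨ z.re = b ∨ z.im = c ∨ z.im = d)}

lemma rectBdry_edges {a b c d : ℝ} (hab : a ≤ b) (hcd : c ≤ d) :
    (∀ t ∈ uIcc a b, (t + c * I : ℂ) ∈ rectBdry a b c d) ∧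
    (∀ t ∈ uIcc a b, (t + d * I : ℂ) ∈ rectBdry a b c d) ∧
    (∀ y ∈ uIcc c d, (b + y * I : ℂ) ∈ rectBdry a b c d) ∧
    (∀ y ∈ uIcc c d, (a + y * I : ℂ) ∈ rectBdry a b c d) := by
  rw [uIcc_of_le hab, uIcc_of_le hcd]
  refine ⟨?_, ?_, ?_, ?_⟩ <;> rintro t ⟨h1, h2⟩ <;> simp [rectBdry, *]

lemma rect_edge_intervalIntegrable {f : ℂ → ℂ} {a b c d : ℝ} (hab : a ≤ b) (hcd : c ≤ d)
    (hf : ContinuousOn f (rectBdry a b c d)) :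
    IntervalIntegrable (fun t : ℝ => f (t + c * I)) volume a b ∧
    IntervalIntegrable (fun t : ℝ => f (t + d * I)) volume a b ∧
    IntervalIntegrable (fun y : ℝ => f (b + y * I)) volume c d ∧
    IntervalIntegrable (fun y : ℝ => f (a + y * I)) volume c d := by
  obtain ⟨h1, h2, h3, h4⟩ := rectBdry_edges hab hcd
  refine ⟨?_, ?_, ?_, ?_⟩
  · exact (hf.comp (by fun_prop) h1).intervalIntegrable
  · exact (hf.comp (by fun_prop) h2).intervalIntegrable
  · exact (hf.comp (by fun_prop) h3).intervalIntegrable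
  · exact (hf.comp (by fun_prop) h4).intervalIntegrable

lemma rectInt_congr {f g : ℂ → ℂ} {a b c d : ℝ} (hab : a ≤ b) (hcd : c ≤ d)
    (h : ∀ z ∈ rectBdry a b c d, f z = g z) : rectInt f a b c d = rectInt g a b c d := by
  obtain ⟨h1, h2, h3, h4⟩ := rectBdry_edges hab hcd
  unfold rectInt
  rw [intervalIntegral.integral_congr (fun t ht => h _ (h1 t ht)),
    intervalIntegral.integral_congr (fun t ht => h _ (h2 t ht)),
    intervalIntegral.integral_congr (fun t ht => h _ (h3 t ht)),
    intervalIntegral.integral_congr (fun t ht => h _ (h4 t ht))]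

lemma rectInt_add {f g : ℂ → ℂ} {a b c d : ℝ} (hab : a ≤ b) (hcd : c ≤ d)
    (hf : ContinuousOn f (rectBdry a b c d)) (hg : ContinuousOn g (rectBdry a b c d)) :
    rectInt (fun z => f z + g z) a b c d = rectInt f a b c d + rectInt g a b c d := by
  obtain ⟨f1, f2, f3, f4⟩ := rect_edge_intervalIntegrable hab hcd hf
  obtain ⟨g1, g2, g3, g4⟩ := rect_edge_intervalIntegrable hab hcd hg
  unfold rectInt
  rw [intervalIntegral.integral_add f1 g1, intervalIntegral.integral_add f2 g2,
    intervalIntegral.integral_add f3 g3, intervalIntegral.integral_add f4 g4]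
  ring

lemma rectInt_const_mul (k : ℂ) (f : ℂ → ℂ) (a b c d : ℝ) :
    rectInt (fun z => k * f z) a b c d = k * rectInt f a b c d := by
  simp only [rectInt, intervalIntegral.integral_const_mul]
  ring

lemma integral_log_deriv {γ : ℝ → ℂ} {v : ℂ} {a b : ℝ} (hγ : ∀ t, HasDerivAt γ v t)
    (hs : ∀ t ∈ uIcc a b, γ t ∈ slitPlane) :
    ∫ t in a..b, v * (γ t)⁻¹ = log (γ b) - log (γ a) := by
  have hc : Continuous γ := continuous_iff_continuousAt.2 fun t => (hγ t).continuousAt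
  refine intervalIntegral.integral_eq_sub_of_hasDerivAt (f := fun t => log (γ t))
    (fun t ht => ?_) ?_
  · simpa [div_eq_mul_inv] using (hγ t).clog_real (hs t ht)
  · refine ContinuousOn.intervalIntegrable ?_
    exact continuousOn_const.mul (hc.continuousOn.inv₀ fun t ht => slitPlane_ne_zero (hs t ht))

/-- The winding number of a rectangle's boundary around an interior point is one. -/
lemma rectInt_inv {a b c d : ℝ} {s : ℂ} (h1 : a < s.re) (h2 : s.re < b) (h3 : c < s.im)
    (h4 : s.im < d) : rectInt (fun z => (z - s)⁻¹) a b c d = 2 * Real.pi * I := by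
  have e1 : ∫ t in a..b, ((t + c * I : ℂ) - s)⁻¹ = log (b + c * I - s) - log (a + c * I - s) := by
    have := integral_log_deriv (γ := fun t : ℝ => (t + c * I : ℂ) - s) (v := 1) (a := a) (b := b)
      (fun t => by simpa using (((hasDerivAt_id t).ofReal_comp.add_const (c * I : ℂ)).sub_const s))
      (fun t _ => Or.inr (by simp; linarith))
    simpa using this
  have e2 : ∫ t in a..b, ((t + d * I : ℂ) - s)⁻¹ = log (b + d * I - s) - log (a + d * I - s) := by
    have := integral_log_deriv (γ := fun t : ℝ => (t + d * I : ℂ) - s) (v := 1) (a := a) (b := b)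
      (fun t => by simpa using (((hasDerivAt_id t).ofReal_comp.add_const (d * I : ℂ)).sub_const s))
      (fun t _ => Or.inr (by simp; linarith))
    simpa using this
  have e3 : I * ∫ y in c..d, ((b + y * I : ℂ) - s)⁻¹
      = log (b + d * I - s) - log (b + c * I - s) := by
    have := integral_log_deriv (γ := fun t : ℝ => (b + t * I : ℂ) - s) (v := I) (a := c) (b := d)
      (fun t => by
        simpa using
          ((((hasDerivAt_id t).ofReal_comp.mul_const I).const_add (b : ℂ)).sub_const s))
      (fun t _ => Or.inl (by simp; linarith))
    simpa [intervalIntegral.integral_const_mul] using this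
  -- The left edge crosses the cut of `log`, so the branch `log (-·)` is used there.
  have e4 : I * ∫ y in c..d, ((a + y * I : ℂ) - s)⁻¹
      = log (-(a + d * I - s)) - log (-(a + c * I - s)) := by
    have := integral_log_deriv (γ := fun t : ℝ => -((a + t * I : ℂ) - s)) (v := -I)
      (a := c) (b := d)
      (fun t => by
        simpa using
          ((((hasDerivAt_id t).ofReal_comp.mul_const I).const_add (a : ℂ)).sub_const s).fun_neg)
      (fun t _ => Or.inl (by simp; linarith))
    rw [← this, ← intervalIntegral.integral_const_mul]
    refine intervalIntegral.integral_congr fun t _ => ?_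
    simp only [inv_neg, neg_mul_neg]
  unfold rectInt
  rw [e1, e2, e3, e4]
  have t1 : log (-(a + d * I - s : ℂ)) = log (a + d * I - s) - Real.pi * I := by
    simp only [log, norm_neg]
    rw [arg_neg_eq_arg_sub_pi_of_im_pos (by simp; linarith)]
    push_cast; ring
  have t2 : log (-(a + c * I - s : ℂ)) = log (a + c * I - s) + Real.pi * I := by
    simp only [log, norm_neg]
    rw [arg_neg_eq_arg_add_pi_of_im_neg (by simp; linarith)]
    push_cast; ring
  rw [t1, t2]; ring

lemma differentiable_dslope {f : ℂ → ℂ} (hf : Differentiable ℂ f) (s : ℂ) :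
    Differentiable ℂ (dslope f s) := by
  rw [← differentiableOn_univ] at hf ⊢
  exact (differentiableOn_dslope univ_mem).2 hf

/-- Residue theorem on a rectangle for a quotient `h / D` of entire functions whose denominator
has only the simple zeros `S` there. Each induction step divides out one zero of `D`. -/
theorem rectInt_residue {a b c d : ℝ} (hab : a ≤ b) (hcd : c ≤ d) (S : Finset ℂ) :
    ∀ h D : ℂ → ℂ, Differentiable ℂ h → Differentiable ℂ D →
      (∀ s ∈ S, (a < s.re ∧ s.re < b ∧ c < s.im ∧ s.im < d) ∧ D s = 0 ∧ deriv D s ≠ 0) →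
      (∀ z : ℂ, a ≤ z.re → z.re ≤ b → c ≤ z.im → z.im ≤ d → D z = 0 → z ∈ S) →
      rectInt (fun z => h z / D z) a b c d = 2 * Real.pi * I * ∑ s ∈ S, h s / deriv D s := by
  classical
  induction S using Finset.induction_on with
  | empty =>
    intro h D hh hD _ hz
    have := integral_boundary_rect_eq_zero_of_differentiableOn (fun z => h z / D z)
      (a + c * I) (b + d * I) ?_
    · simpa [rectInt] using this
    · intro z hz'
      have h1 := hz'.1
      have h2 := hz'.2
      simp only [add_re, ofReal_re, mul_re, I_re, mul_zero, ofReal_im, I_im, mul_one, sub_self,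
        add_zero, add_im, mul_im, zero_add, uIcc_of_le hab, uIcc_of_le hcd, mem_preimage,
        mem_Icc] at h1 h2
      exact ((hh z).div (hD z)
        fun h0 => by simpa using hz z h1.1 h1.2 h2.1 h2.2 h0).differentiableWithinAt
  | insert s S hs ih =>
    intro h D hh hD hS hz
    obtain ⟨⟨s1, s2, s3, s4⟩, hDs, hDs'⟩ := hS s (Finset.mem_insert_self _ _)
    set E := dslope D s with hE
    have hEd : Differentiable ℂ E := differentiable_dslope hD s
    have hDE : ∀ z, D z = (z - s) * E z := fun z => by
      have := sub_smul_dslope D s z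
      rw [hDs, sub_zero, smul_eq_mul] at this
      exact this.symm
    have hEs : E s = deriv D s := dslope_same _ _
    set r := h s / deriv D s with hr
    set k := dslope (fun z => h z - r * E z) s with hk
    have hkd : Differentiable ℂ k := differentiable_dslope (hh.sub (hEd.const_mul r)) s
    have hkE : ∀ z, h z - r * E z = (z - s) * k z := fun z => by
      have := sub_smul_dslope (fun z => h z - r * E z) s z
      rw [smul_eq_mul] at this
      rw [hk, this, hEs, hr, div_mul_cancel₀ _ hDs']; ring
    have hS' : ∀ u ∈ S, u ≠ s := fun u hu he => hs (he ▸ hu)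
    have hEu : ∀ u ∈ S, E u = 0 := fun u hu => by
      have := (hS u (Finset.mem_insert_of_mem hu)).2.1
      rw [hDE] at this
      exact (mul_eq_zero.1 this).resolve_left (sub_ne_zero.2 (hS' u hu))
    have hderiv : ∀ u ∈ S, deriv D u = (u - s) * deriv E u := fun u hu => by
      have : D = fun z => (z - s) * E z := funext hDE
      have h' := (((hasDerivAt_id u).sub_const s).mul (hEd u).hasDerivAt).deriv
      rw [this]
      refine h'.trans ?_
      simp [hEu u hu]
    have hsE : E s ≠ 0 := by rwa [hEs]
    have hbd : ∀ z ∈ rectBdry a b c d, z ≠ s ∧ E z ≠ 0 := by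
      intro z hzb
      have hne : ∀ u ∈ insert s S, z ≠ u := by
        rintro u hu rfl
        obtain ⟨⟨u1, u2, u3, u4⟩, -⟩ := hS z hu
        rcases hzb.2 with h | h | h | h <;> linarith
      refine ⟨hne s (Finset.mem_insert_self _ _), fun h0 => ?_⟩
      exact hne z (hz z hzb.1.1 hzb.1.2.1 hzb.1.2.2.1 hzb.1.2.2.2 (by rw [hDE, h0, mul_zero])) rfl
    have key := ih k E hkd hEd (fun u hu => by
        have := hS u (Finset.mem_insert_of_mem hu)
        refine ⟨this.1, hEu u hu, fun h0 => this.2.2 ?_⟩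
        rw [hderiv u hu, h0, mul_zero])
      (fun z z1 z2 z3 z4 h0 => by
        have := hz z z1 z2 z3 z4 (by rw [hDE, h0, mul_zero])
        refine (Finset.mem_insert.1 this).resolve_left ?_
        rintro rfl
        exact hsE h0)
    have hsplit : rectInt (fun z => h z / D z) a b c d
        = rectInt (fun z => r * (z - s)⁻¹ + k z / E z) a b c d := by
      refine rectInt_congr hab hcd fun z hzb => ?_
      obtain ⟨z1, z2⟩ := hbd z hzb
      have z1' := sub_ne_zero.2 z1
      rw [hDE]
      field_simp
      linear_combination hkE z
    rw [hsplit, rectInt_add hab hcd, rectInt_const_mul, rectInt_inv s1 s2 s3 s4, key,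
      Finset.sum_insert hs, ← hr]
    · have : ∑ u ∈ S, k u / deriv E u = ∑ u ∈ S, h u / deriv D u := by
        refine Finset.sum_congr rfl fun u hu => ?_
        have h0 := hkE u
        rw [hEu u hu, mul_zero, sub_zero] at h0
        rw [h0, hderiv u hu, mul_div_mul_left _ _ (sub_ne_zero.2 (hS' u hu))]
      rw [this]; ring
    · exact continuousOn_const.mul ((continuousOn_id.sub continuousOn_const).inv₀
        fun z hzb => sub_ne_zero.2 (hbd z hzb).1)
    · exact hkd.continuous.continuousOn.div hEd.continuous.continuousOn fun z hzb => (hbd z hzb).2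

/-! ### The integral of `1 / (e^{x t²} + 1)` and `ζ(1/2)` -/

/-- The alternating Dirichlet series of `ζ` on its half-plane of absolute convergence. -/
lemma hasSum_eta {s : ℂ} (hs : 1 < s.re) :
    HasSum (fun n : ℕ => (-1 : ℂ) ^ n / (n + 1 : ℂ) ^ s)
      ((1 - 2 ^ (1 - s)) * riemannZeta s) := by
  set f : ℕ → ℂ := fun n => 1 / (n + 1 : ℂ) ^ s with hf
  have hsum : Summable f := by
    have := (summable_nat_add_iff 1).2 (Complex.summable_one_div_nat_cpow.2 hs)
    simpa [hf] using this
  have hz : HasSum f (riemannZeta s) := by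
    rw [zeta_eq_tsum_one_div_nat_add_one_cpow hs]; exact hsum.hasSum
  have hodd : HasSum (fun m : ℕ => f (2 * m + 1)) (2 ^ (-s) * riemannZeta s) := by
    convert! hz.mul_left ((2 : ℂ) ^ (-s)) using 2 with m
    have : ((2 * m + 1 : ℕ) + 1 : ℂ) = ((2 : ℝ) : ℂ) * (((m + 1 : ℕ) : ℝ) : ℂ) := by
      push_cast; ring
    simp only [hf]
    rw [this, mul_cpow_ofReal_nonneg (by norm_num) (by positivity), cpow_neg]
    push_cast
    rw [one_div, mul_inv, one_div]
  have heven : Summable (fun m : ℕ => f (2 * m)) :=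
    hsum.comp_injective (fun a b h => by simpa using h)
  obtain ⟨e, he⟩ := heven
  have h1 : riemannZeta s = e + 2 ^ (-s) * riemannZeta s := hz.unique (he.even_add_odd hodd)
  have h2 : HasSum (fun n : ℕ => (-1 : ℂ) ^ n / (n + 1 : ℂ) ^ s)
      (e + -(2 ^ (-s) * riemannZeta s)) := by
    refine HasSum.even_add_odd ?_ ?_
    · convert! he using 2 with m
      simp [hf, pow_mul]
    · convert! hodd.neg using 2 with m
      simp [hf, pow_succ, pow_mul, neg_div]
  convert! h2 using 1
  rw [cpow_sub _ _ two_ne_zero, cpow_one, div_eq_mul_inv, ← cpow_neg]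
  linear_combination h1

/-- The Fermi–Dirac kernel `1 / (e^t + 1)`. -/
noncomputable def fermi (t : ℝ) : ℂ := ((1 / (Real.exp t + 1) : ℝ) : ℂ)

lemma mellin_fermi_of_one_lt {s : ℂ} (hs : 1 < s.re) :
    mellin fermi s = Gamma s * ((1 - 2 ^ (1 - s)) * riemannZeta s) := by
  have h := hasSum_mellin (a := fun n : ℕ => (-1 : ℂ) ^ n) (p := fun n : ℕ => (n + 1 : ℝ))
    (F := fermi) (s := s) (fun n => Or.inr (by positivity)) (by linarith) ?_ ?_
  · refine h.unique ?_
    convert! (hasSum_eta hs).mul_left (Gamma s) using 2 with n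
    push_cast; ring
  · intro t ht
    have ht : 0 < t := ht
    have hlt : Real.exp (-t) < 1 := by simpa using ht
    have hg := hasSum_geometric_of_norm_lt_one (ξ := -(Real.exp (-t) : ℂ)) (by
      rw [norm_neg, norm_real, Real.norm_of_nonneg (Real.exp_pos _).le]; exact hlt)
    convert! hg.mul_left (Real.exp (-t) : ℂ) using 1
    · ext n
      rw [neg_pow (Real.exp (-t) : ℂ), ← ofReal_pow, ← Real.exp_nat_mul, mul_left_comm, ← ofReal_mul,
        ← Real.exp_add]
      congr 3; ring
    · rw [fermi, Real.exp_neg]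
      have := Real.exp_pos t
      have h0 : (Real.exp t : ℂ) ≠ 0 := by exact_mod_cast this.ne'
      have h1 : (Real.exp t + 1 : ℂ) ≠ 0 := by exact_mod_cast (by positivity : Real.exp t + 1 ≠ 0)
      push_cast at *
      rw [sub_neg_eq_add, ← mul_inv, mul_add, mul_one, mul_inv_cancel₀ h0, one_div]
  · have := (summable_nat_add_iff 1).2 (Real.summable_one_div_nat_rpow.2 hs)
    simpa using this

lemma differentiableAt_mellin_fermi {s : ℂ} (hs : 0 < s.re) :
    DifferentiableAt ℂ (mellin fermi) s := by
  have hb : ∀ t : ℝ, ‖fermi t‖ = 1 / (Real.exp t + 1) := fun t => by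
    have := Real.exp_pos t
    rw [fermi, norm_real, Real.norm_of_nonneg (by positivity)]
  have hc : Continuous fermi := by
    unfold fermi
    refine continuous_ofReal.comp (continuous_const.div (by fun_prop) fun t => ?_)
    have := Real.exp_pos t
    positivity
  refine mellin_differentiableAt_of_isBigO_rpow_exp (a := 1) (b := 0) one_pos
    (hc.locallyIntegrable.locallyIntegrableOn _) ?_ ?_ hs
  · refine Asymptotics.IsBigO.of_bound 1 (Eventually.of_forall fun t => ?_)
    rw [hb, Real.norm_of_nonneg (Real.exp_pos _).le, neg_one_mul, Real.exp_neg, one_mul, one_div]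
    have := Real.exp_pos t
    gcongr; linarith
  · refine Asymptotics.IsBigO.of_bound 1 (Eventually.of_forall fun t => ?_)
    have := Real.exp_pos t
    rw [hb, neg_zero, Real.rpow_zero, norm_one, mul_one, div_le_one (by positivity)]
    linarith

/-- `(s - 1) ζ(s)` with the removable singularity at `s = 1` filled in. -/
noncomputable def zetaReg (s : ℂ) : ℂ :=
  (s - 1) * (riemannZeta s - 1 / (s - 1) / Gammaℝ s) + (Gammaℝ s)⁻¹

lemma zetaReg_eq {s : ℂ} (hs : s ≠ 1) : zetaReg s = (s - 1) * riemannZeta s := by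
  have := sub_ne_zero.2 hs
  rw [zetaReg, mul_sub, ← mul_div_assoc, mul_one_div, div_self this, one_div]; ring

lemma differentiable_zetaReg : Differentiable ℂ zetaReg := by
  intro s
  by_cases hs : s = 1
  · subst hs
    refine DifferentiableAt.add (DifferentiableAt.mul (by fun_prop) ?_)
      (differentiable_Gammaℝ_inv 1)
    have := HurwitzZeta.differentiableAt_hurwitzZeta_sub_one_div 0
    rwa [HurwitzZeta.hurwitzZeta_zero] at this
  · have h : DifferentiableAt ℂ (fun s => (s - 1) * riemannZeta s) s :=
      DifferentiableAt.mul (by fun_prop) (differentiableAt_riemannZeta hs)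
    refine h.congr_of_eventuallyEq ?_
    filter_upwards [isOpen_ne.mem_nhds hs] with z hz using zetaReg_eq hz

lemma mellin_fermi_half :
    mellin fermi (1 / 2) = Real.sqrt Real.pi * ((1 - Real.sqrt 2) * riemannZeta (1 / 2)) := by
  set U : Set ℂ := {s | 0 < s.re} with hU
  have hUo : IsOpen U := isOpen_lt continuous_const continuous_re
  have hUc : IsPreconnected U := (convex_halfSpace_re_gt 0).isPreconnected
  have hf : AnalyticOnNhd ℂ (fun s => (s - 1) * mellin fermi s) U :=
    DifferentiableOn.analyticOnNhd (fun s hs =>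
      (DifferentiableAt.mul (by fun_prop)
        (differentiableAt_mellin_fermi hs)).differentiableWithinAt) hUo
  have hg : AnalyticOnNhd ℂ (fun s => Gamma s * ((1 - 2 ^ (1 - s)) * zetaReg s)) U := by
    refine DifferentiableOn.analyticOnNhd (fun s hs =>
      (DifferentiableAt.mul (differentiableAt_Gamma _ fun m h => ?_)
        (DifferentiableAt.mul ?_ (differentiable_zetaReg s))).differentiableWithinAt) hUo
    · have : 0 < s.re := hs
      rw [h] at this
      simp at this
      linarith [(Nat.cast_nonneg m : (0 : ℝ) ≤ m)]
    · exact (differentiableAt_const _).sub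
        (DifferentiableAt.const_cpow (by fun_prop) (Or.inl two_ne_zero))
  have := hf.eqOn_of_preconnected_of_eventuallyEq hg hUc (z₀ := 2) (by simp [hU]) (by
    have ho : IsOpen {s : ℂ | 1 < s.re} := isOpen_lt continuous_const continuous_re
    filter_upwards [ho.mem_nhds (by simp : (2 : ℂ) ∈ {s : ℂ | 1 < s.re})] with s hs
    have hs : 1 < s.re := hs
    rw [mellin_fermi_of_one_lt hs, zetaReg_eq (by rintro rfl; simp at hs)]; ring)
  have h2 := this (show (1 / 2 : ℂ) ∈ U by simp [hU])
  simp only at h2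
  rw [zetaReg_eq (by norm_num), Complex.Gamma_one_half_eq] at h2
  have e1 : (Real.pi : ℂ) ^ (1 / 2 : ℂ) = Real.sqrt Real.pi := by
    rw [Real.sqrt_eq_rpow, ofReal_cpow Real.pi_pos.le]; norm_num
  have e2 : (2 : ℂ) ^ (1 - 1 / 2 : ℂ) = Real.sqrt 2 := by
    rw [Real.sqrt_eq_rpow, ofReal_cpow (by norm_num)]; norm_num
  rw [e1, e2] at h2
  linear_combination (-2) * h2

lemma integrable_fermi_sq {x : ℝ} (hx : 0 < x) :
    Integrable (fun t : ℝ => 1 / (Real.exp (x * t ^ 2) + 1)) := by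
  refine (integrable_exp_neg_mul_sq hx).mono' ?_ (Eventually.of_forall fun t => ?_)
  · refine Continuous.aestronglyMeasurable (continuous_const.div (by fun_prop) fun t => ?_)
    positivity
  · have := Real.exp_pos (x * t ^ 2)
    rw [Real.norm_of_nonneg (by positivity), neg_mul, Real.exp_neg, one_div]
    gcongr; linarith

/-- The integral `∫₀^∞ dt / (e^{x t²} + 1)` in terms of `ζ(1/2)`. -/
lemma integral_fermi_sq {x : ℝ} (hx : 0 < x) :
    ∫ t in Ioi (0 : ℝ), 1 / (Real.exp (x * t ^ 2) + 1) =
      -(1 / 2 * Real.sqrt (Real.pi / x) * (Real.sqrt 2 - 1) * (riemannZeta (1 / 2)).re) := by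
  have h1 := mellin_comp_rpow (fun t => fermi (x * t)) 1 2
  rw [mellin_comp_mul_left _ _ hx] at h1
  have h3 : mellin (fun t : ℝ => fermi (x * t ^ (2 : ℝ))) 1
      = ((∫ t in Ioi (0 : ℝ), 1 / (Real.exp (x * t ^ 2) + 1) : ℝ) : ℂ) := by
    rw [mellin, ← integral_complex_ofReal]
    refine setIntegral_congr_fun measurableSet_Ioi fun t _ => ?_
    simp [fermi]
  have e1 : (x : ℂ) ^ (-(1 / (2 : ℝ) : ℂ)) = (((Real.sqrt x)⁻¹ : ℝ) : ℂ) := by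
    rw [Real.sqrt_eq_rpow, ← Real.rpow_neg hx.le, ofReal_cpow hx.le]; norm_num
  rw [h3, e1] at h1
  have e2 : ((1 : ℂ) / ((2 : ℝ) : ℂ)) = 1 / 2 := by norm_num
  rw [e2, mellin_fermi_half] at h1
  have h4 := congrArg re h1
  rw [ofReal_re] at h4
  rw [h4, Real.sqrt_div Real.pi_pos.le]
  rw [show |(2 : ℝ)|⁻¹ • ((((Real.sqrt x)⁻¹ : ℝ) : ℂ) • ((Real.sqrt Real.pi : ℂ) *
      ((1 - Real.sqrt 2) * riemannZeta (1 / 2))))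
      = (((1 / 2 * (Real.sqrt x)⁻¹ * Real.sqrt Real.pi * (1 - Real.sqrt 2) : ℝ)) : ℂ)
        * riemannZeta (1 / 2) by
    rw [abs_of_pos two_pos, Complex.real_smul, smul_eq_mul]; push_cast; ring]
  rw [re_ofReal_mul]
  ring

/-! ### The functions `ksin` and `kcos` -/

/-- The entire function `p sin πz + z cos πz`, whose zeros are `0` and `±λ_n`. -/
noncomputable def ksin (p : ℝ) (z : ℂ) : ℂ := p * sin (Real.pi * z) + z * cos (Real.pi * z)

/-- The companion `π (p cos πz - z sin πz)`; the quotient `kcos / ksin` plays the role that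
`π cot πz` plays for the integers. -/
noncomputable def kcos (p : ℝ) (z : ℂ) : ℂ :=
  Real.pi * (p * cos (Real.pi * z) - z * sin (Real.pi * z))

lemma ksin_neg (p : ℝ) (z : ℂ) : ksin p (-z) = -ksin p z := by
  simp only [ksin, mul_neg, sin_neg, cos_neg]; ring

lemma kcos_neg (p : ℝ) (z : ℂ) : kcos p (-z) = kcos p z := by
  simp only [kcos, mul_neg, sin_neg, cos_neg]; ring

lemma differentiable_ksin (p : ℝ) : Differentiable ℂ (ksin p) := by
  unfold ksin; fun_prop

lemma differentiable_kcos (p : ℝ) : Differentiable ℂ (kcos p) := by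
  unfold kcos; fun_prop

lemma deriv_ksin (p : ℝ) (z : ℂ) : deriv (ksin p) z =
    (Real.pi * p + 1) * cos (Real.pi * z) - Real.pi * z * sin (Real.pi * z) := by
  have h0 : HasDerivAt (fun z : ℂ => (Real.pi : ℂ) * z) Real.pi z := by
    simpa using (hasDerivAt_id z).const_mul (Real.pi : ℂ)
  have h1 := (h0.csin.const_mul (p : ℂ)).add ((hasDerivAt_id z).mul h0.ccos)
  refine h1.deriv.trans ?_
  simp only [id]; ring

/-- `2i · ksin` in terms of `q = e^{2πiz}`. -/
lemma two_I_ksin (p : ℝ) (z : ℂ) : 2 * I * ksin p z * exp (Real.pi * z * I) =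
    (p + I * z) * exp (2 * Real.pi * z * I) - (p - I * z) := by
  have e1 : exp (2 * Real.pi * z * I) = exp (Real.pi * z * I) ^ 2 := by
    rw [← exp_nat_mul]; congr 1; push_cast; ring
  have e2 : exp (-(Real.pi * z) * I) * exp (Real.pi * z * I) = 1 := by
    rw [← exp_add]; simp
  rw [e1, ksin, sin, cos]
  linear_combination (p * I ^ 2 + I * z) * e2 + (p - p * exp (Real.pi * z * I) ^ 2) * I_sq

lemma kcos_add (p : ℝ) (z : ℂ) : kcos p z + I * Real.pi * ksin p z =
    Real.pi * (p + I * z) * exp (Real.pi * z * I) := by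
  rw [exp_mul_I, kcos, ksin]
  linear_combination (-Real.pi * z * sin (Real.pi * z)) * I_sq

lemma kcot_add (p : ℝ) {z : ℂ} (hz : ksin p z ≠ 0) : kcos p z / ksin p z + I * Real.pi =
    2 * Real.pi * I * ((p + I * z) * exp (2 * Real.pi * z * I)) /
      ((p + I * z) * exp (2 * Real.pi * z * I) - (p - I * z)) := by
  have e1 : exp (2 * Real.pi * z * I) = exp (Real.pi * z * I) ^ 2 := by
    rw [← exp_nat_mul]; congr 1; push_cast; ring
  have h1 : kcos p z / ksin p z + I * Real.pi =
      (kcos p z + I * Real.pi * ksin p z) / ksin p z := by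
    field_simp
  rw [h1, kcos_add, ← two_I_ksin, e1]
  have := exp_ne_zero (Real.pi * z * I)
  have := I_ne_zero
  field_simp

lemma norm_q (z : ℂ) : ‖exp (2 * Real.pi * z * I)‖ = Real.exp (-(2 * Real.pi * z.im)) := by
  rw [norm_exp]; congr 1; simp

/-- The factor `p + iz` is dominated by `p - iz` in the upper half-plane; this makes `ksin`
zero-free there. -/
lemma norm_den_ge {p : ℝ} (hp : 0 < p) {z : ℂ} (hz : 0 < z.im) :
    0 < ‖(p - I * z : ℂ)‖ ∧ ‖(p + I * z : ℂ)‖ ≤ ‖(p - I * z : ℂ)‖ := by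
  constructor
  · rw [norm_pos_iff]
    intro h
    have := congrArg re h
    simp at this
    linarith
  · rw [← sq_le_sq₀ (norm_nonneg _) (norm_nonneg _), Complex.sq_norm, Complex.sq_norm,
      normSq_apply, normSq_apply]
    simp
    nlinarith [mul_pos hp hz]

lemma ksin_ne_zero_of_im_pos {p : ℝ} (hp : 0 < p) {z : ℂ} (hz : 0 < z.im) : ksin p z ≠ 0 := by
  intro h
  have h1 := two_I_ksin p z
  rw [h, mul_zero, zero_mul] at h1
  have h2 := congrArg norm (sub_eq_zero.1 h1.symm)
  rw [norm_mul, norm_q] at h2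
  obtain ⟨h3, h4⟩ := norm_den_ge hp hz
  have h5 : Real.exp (-(2 * Real.pi * z.im)) < 1 := by
    have := mul_pos Real.pi_pos hz
    rw [Real.exp_lt_one_iff]; linarith
  have := Real.exp_pos (-(2 * Real.pi * z.im))
  nlinarith

lemma ksin_ne_zero_of_im_ne {p : ℝ} (hp : 0 < p) {z : ℂ} (hz : z.im ≠ 0) : ksin p z ≠ 0 := by
  rcases hz.lt_or_gt with h | h
  · have := ksin_ne_zero_of_im_pos hp (z := -z) (by simpa using h)
    rw [ksin_neg] at this
    simpa using this
  · exact ksin_ne_zero_of_im_pos hp h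

/-- Exponential closeness of `kcos / ksin` to `-iπ` in the upper half-plane. -/
lemma norm_kcot_add_le {p : ℝ} (hp : 0 < p) {z : ℂ} (hz : 0 < z.im) :
    ‖kcos p z / ksin p z + I * Real.pi‖ ≤
      2 * Real.pi * Real.exp (-(2 * Real.pi * z.im)) / (1 - Real.exp (-(2 * Real.pi * z.im))) := by
  rw [kcot_add p (ksin_ne_zero_of_im_pos hp hz), norm_div]
  obtain ⟨h3, h4⟩ := norm_den_ge hp hz
  have h5 : Real.exp (-(2 * Real.pi * z.im)) < 1 := by
    have := mul_pos Real.pi_pos hz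
    rw [Real.exp_lt_one_iff]; linarith
  have h6 := Real.exp_pos (-(2 * Real.pi * z.im))
  set Q := Real.exp (-(2 * Real.pi * z.im)) with hQ
  have hd : ‖(p - I * z : ℂ)‖ * (1 - Q) ≤
      ‖(p + I * z) * exp (2 * Real.pi * z * I) - (p - I * z)‖ := by
    have := norm_sub_norm_le (p - I * z : ℂ) ((p + I * z) * exp (2 * Real.pi * z * I))
    rw [norm_sub_rev (p - I * z : ℂ) ((p + I * z) * _), norm_mul, norm_q, ← hQ] at this
    nlinarith
  have hn : ‖2 * Real.pi * I * ((p + I * z) * exp (2 * Real.pi * z * I))‖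
      ≤ 2 * Real.pi * (‖(p - I * z : ℂ)‖ * Q) := by
    rw [norm_mul, norm_mul _ (exp _), norm_q, ← hQ]
    have : ‖(2 * Real.pi * I : ℂ)‖ = 2 * Real.pi := by
      simp [abs_of_pos Real.pi_pos]
    rw [this]
    have := Real.pi_pos
    gcongr
  have h7 : 0 < ‖(p - I * z : ℂ)‖ * (1 - Q) := mul_pos h3 (by linarith)
  calc _ ≤ 2 * Real.pi * (‖(p - I * z : ℂ)‖ * Q) / (‖(p - I * z : ℂ)‖ * (1 - Q)) := by
        have := Real.pi_pos
        gcongr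
    _ = _ := by
        have : 1 - Q ≠ 0 := by linarith
        field_simp

/-- Boundedness of `kcos / ksin` on the vertical lines `Re z = N ≥ 1`. -/
lemma kcot_side {p : ℝ} (hp : 0 < p) {N : ℕ} (hN : 1 ≤ N) (y : ℝ) :
    ksin p (N + y * I) ≠ 0 ∧
    ‖kcos p (N + y * I) / ksin p (N + y * I)‖ ≤ 2 * Real.pi * (p + |y| + 1) + Real.pi := by
  have hN' : (1 : ℝ) ≤ N := by exact_mod_cast hN
  set z : ℂ := N + y * I with hz
  set Q := Real.exp (-(2 * Real.pi * y)) with hQ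
  have hQ0 : 0 < Q := Real.exp_pos _
  have hq : exp (2 * Real.pi * z * I) = (Q : ℂ) := by
    have : (2 * Real.pi * z * I : ℂ) = ((-(2 * Real.pi * y) : ℝ) : ℂ) + N * (2 * Real.pi * I) := by
      rw [hz]; push_cast; linear_combination (2 * Real.pi * y) * I_sq
    rw [this, exp_add, exp_nat_mul_two_pi_mul_I, mul_one, hQ, ofReal_exp]
  have hd : (N : ℝ) * (1 + Q) ≤ ‖(p + I * z) * (Q : ℂ) - (p - I * z)‖ := by
    refine le_trans ?_ (abs_im_le_norm _)
    refine le_trans (le_of_eq ?_) (le_abs_self _)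
    simp [hz]; ring
  have hd0 : 0 < (N : ℝ) * (1 + Q) := by positivity
  have hk : ksin p z ≠ 0 := by
    intro h
    have h1 := two_I_ksin p z
    rw [h, mul_zero, zero_mul, hq] at h1
    rw [← h1, norm_zero] at hd
    linarith
  refine ⟨hk, ?_⟩
  have h1 := kcot_add p hk
  rw [hq] at h1
  have hz' : ‖(p + I * z : ℂ)‖ ≤ p + |y| + N := by
    calc ‖(p + I * z : ℂ)‖ ≤ ‖(p : ℂ)‖ + ‖I * z‖ := norm_add_le _ _
      _ ≤ p + (N + |y|) := by
          rw [norm_real, Real.norm_of_nonneg hp.le, norm_mul, norm_I, one_mul]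
          gcongr
          refine (norm_add_le _ _).trans ?_
          simp
      _ = _ := by ring
  have h2 : ‖kcos p z / ksin p z + I * Real.pi‖ ≤ 2 * Real.pi * (p + |y| + 1) := by
    rw [h1, norm_div]
    have hpi := Real.pi_pos
    calc _ ≤ 2 * Real.pi * ((p + |y| + N) * Q) / (N * (1 + Q)) := by
          gcongr
          rw [norm_mul, norm_mul _ (Q : ℂ), norm_real, Real.norm_of_nonneg hQ0.le]
          have : ‖(2 * Real.pi * I : ℂ)‖ = 2 * Real.pi := by
            simp [abs_of_pos Real.pi_pos]
          rw [this]
          gcongr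
      _ ≤ _ := by
          rw [div_le_iff₀ hd0, mul_assoc (2 * Real.pi)]
          have h3 : (p + |y| + N) ≤ (p + |y| + 1) * N := by
            nlinarith [abs_nonneg y]
          have h4 : (p + |y| + N) * Q ≤ (p + |y| + 1) * N * (1 + Q) := by
            have := abs_nonneg y
            nlinarith [mul_le_mul_of_nonneg_right h3 hQ0.le,
              mul_pos (by linarith : 0 < p + |y| + 1) (by linarith : (0 : ℝ) < N)]
          have := mul_le_mul_of_nonneg_left h4 (by positivity : 0 ≤ 2 * Real.pi)
          linarith
  calc ‖kcos p z / ksin p z‖ = ‖(kcos p z / ksin p z + I * Real.pi) - I * Real.pi‖ := by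
        rw [add_sub_cancel_right]
    _ ≤ _ := (norm_sub_le _ _).trans (by
        have : ‖(I * Real.pi : ℂ)‖ = Real.pi := by simp [abs_of_pos Real.pi_pos]
        rw [this]; linarith)

lemma ksin_ofReal (p t : ℝ) : ksin p t =
    ((p * Real.sin (Real.pi * t) + t * Real.cos (Real.pi * t) : ℝ) : ℂ) := by
  simp [ksin]

lemma ksin_lam {p l : ℝ} (hp : 0 < p) (hc : Real.cos (Real.pi * l) ≠ 0)
    (ht : Real.tan (Real.pi * l) = -l / p) :
    p * Real.sin (Real.pi * l) + l * Real.cos (Real.pi * l) = 0 := by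
  rw [Real.tan_eq_sin_div_cos, div_eq_div_iff hc hp.ne'] at ht
  linarith

lemma cos_ne_zero_of_mem {n : ℕ} {l : ℝ} (h1 : (n : ℝ) - 1 / 2 < l) (h2 : l < n) :
    Real.cos (Real.pi * l) ≠ 0 := by
  have hpi := Real.pi_pos
  have : 0 < Real.cos (Real.pi * l - n * Real.pi) :=
    Real.cos_pos_of_mem_Ioo ⟨by nlinarith, by nlinarith⟩
  rw [Real.cos_sub_nat_mul_pi] at this
  intro h
  simp [h] at this

lemma tan_sub_nat (n : ℕ) (l : ℝ) : Real.tan (Real.pi * l) = Real.tan (Real.pi * l - n * Real.pi) :=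
  (Real.tan_sub_nat_mul_pi _ _).symm

/-- Between `n - 1/2` and `n` the increasing `tan πt` meets the decreasing `-t/p` only once. -/
lemma lam_unique {p : ℝ} (hp : 0 < p) {n : ℕ} {l l' : ℝ} (h1 : (n : ℝ) - 1 / 2 < l) (h2 : l < n)
    (h1' : (n : ℝ) - 1 / 2 < l') (h2' : l' < n) (ht : Real.tan (Real.pi * l) = -l / p)
    (ht' : Real.tan (Real.pi * l') = -l' / p) : l = l' := by
  have hpi := Real.pi_pos
  have mono : ∀ {u v : ℝ}, (n : ℝ) - 1 / 2 < u → u < v → v < n →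
      Real.tan (Real.pi * u) = -u / p → Real.tan (Real.pi * v) = -v / p → False := by
    intro u v hu huv hv tu tv
    have : Real.tan (Real.pi * u - n * Real.pi) < Real.tan (Real.pi * v - n * Real.pi) :=
      Real.strictMonoOn_tan ⟨by nlinarith, by nlinarith⟩ ⟨by nlinarith, by nlinarith⟩
        (by nlinarith)
    rw [← tan_sub_nat, ← tan_sub_nat, tu, tv, div_lt_div_iff_of_pos_right hp] at this
    linarith
  rcases lt_trichotomy l l' with h | h | h
  · exact (mono h1 h h2' ht ht').elim
  · exact h
  · exact (mono h1' h h2 ht' ht).elim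

/-- A positive real zero of `ksin` lies in some `(n - 1/2, n)` and satisfies the tangent equation. -/
lemma pos_zero_mem {p : ℝ} (hp : 0 < p) {t : ℝ} (ht : 0 < t)
    (h : p * Real.sin (Real.pi * t) + t * Real.cos (Real.pi * t) = 0) :
    ∃ n : ℕ, 1 ≤ n ∧ (n : ℝ) - 1 / 2 < t ∧ t < n ∧ Real.tan (Real.pi * t) = -t / p := by
  have hpi := Real.pi_pos
  have hsc := Real.sin_sq_add_cos_sq (Real.pi * t)
  have hc : Real.cos (Real.pi * t) ≠ 0 := by
    intro h0
    rw [h0, mul_zero, add_zero] at h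
    have := (mul_eq_zero.1 h).resolve_left hp.ne'
    rw [this, h0] at hsc
    norm_num at hsc
  have htan : Real.tan (Real.pi * t) = -t / p := by
    rw [Real.tan_eq_sin_div_cos, div_eq_div_iff hc hp.ne']; linarith
  have hneg : Real.tan (Real.pi * t) < 0 := by
    rw [htan]; exact div_neg_of_neg_of_pos (by linarith) hp
  set m := ⌊t⌋₊ with hm
  have hm1 : (m : ℝ) ≤ t := Nat.floor_le ht.le
  have hm2 : t < m + 1 := Nat.lt_floor_add_one t
  refine ⟨m + 1, by omega, ?_, by push_cast; exact hm2, htan⟩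
  push_cast
  by_contra hcon
  push Not at hcon
  have h3 : 0 ≤ Real.tan (Real.pi * t - m * Real.pi) :=
    Real.tan_nonneg_of_nonneg_of_le_pi_div_two (by nlinarith) (by nlinarith)
  rw [← tan_sub_nat] at h3
  linarith

/-- Residue of `kcos / ksin` at a real zero of `ksin`; the value at `0` gives the constant
term of the formula. -/
lemma residue_lam {p l : ℝ} (hp : 0 < p)
    (h : p * Real.sin (Real.pi * l) + l * Real.cos (Real.pi * l) = 0) :
    deriv (ksin p) l ≠ 0 ∧ kcos p l / deriv (ksin p) l =
      (((p ^ 2 + l ^ 2) / (p * (p + 1 / Real.pi) + l ^ 2) : ℝ) : ℂ) := by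
  have hpi := Real.pi_pos
  have hsc := Real.sin_sq_add_cos_sq (Real.pi * l)
  have hc : Real.cos (Real.pi * l) ≠ 0 := by
    intro h0
    rw [h0, mul_zero, add_zero] at h
    have := (mul_eq_zero.1 h).resolve_left hp.ne'
    rw [this, h0] at hsc
    norm_num at hsc
  have hd : deriv (ksin p) l = ((((Real.pi * p + 1) * Real.cos (Real.pi * l) -
      Real.pi * l * Real.sin (Real.pi * l)) : ℝ) : ℂ) := by
    rw [deriv_ksin]; simp
  have hk : kcos p l = ((Real.pi * (p * Real.cos (Real.pi * l) -
      l * Real.sin (Real.pi * l)) : ℝ) : ℂ) := by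
    simp [kcos]
  have e1 : p * ((Real.pi * p + 1) * Real.cos (Real.pi * l) -
      Real.pi * l * Real.sin (Real.pi * l)) =
      Real.cos (Real.pi * l) * (Real.pi * p ^ 2 + p + Real.pi * l ^ 2) := by
    linear_combination (-Real.pi * l) * h
  have e2 : p * (Real.pi * (p * Real.cos (Real.pi * l) - l * Real.sin (Real.pi * l))) =
      Real.cos (Real.pi * l) * (Real.pi * (p ^ 2 + l ^ 2)) := by
    linear_combination (-Real.pi * l) * h
  have hpos : 0 < Real.pi * p ^ 2 + p + Real.pi * l ^ 2 := by positivity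
  have hne : (Real.pi * p + 1) * Real.cos (Real.pi * l) -
      Real.pi * l * Real.sin (Real.pi * l) ≠ 0 := by
    intro h0
    rw [h0, mul_zero] at e1
    exact mul_ne_zero hc hpos.ne' e1.symm
  refine ⟨by rw [hd]; exact_mod_cast hne, ?_⟩
  rw [hd, hk, ← ofReal_div, ofReal_inj, ← mul_div_mul_left _ _ hp.ne', e1, e2,
    mul_div_mul_left _ _ hc]
  have : Real.pi * p ^ 2 + p + Real.pi * l ^ 2 = Real.pi * (p * (p + 1 / Real.pi) + l ^ 2) := by
    field_simp
  rw [this, mul_div_mul_left _ _ Real.pi_ne_zero]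

/-! ### The function `e^{x z²} + 1` and the `Gfun` terms -/

/-- The entire function `e^{x z²} + 1`. -/
noncomputable def gden (x : ℝ) (z : ℂ) : ℂ := exp (x * z ^ 2) + 1

/-- The abscissa `b_j` of the zeros `(±1 ± i) b_j` of `gden x`. -/
noncomputable def poleB (x : ℝ) (j : ℕ) : ℝ := Real.sqrt (Real.pi * (2 * j + 1) / (2 * x))

/-- The zero `(1 + i) b_j` of `gden x`. -/
noncomputable def poleP (x : ℝ) (j : ℕ) : ℂ := ⟨poleB x j, poleB x j⟩

/-- The zero `(-1 + i) b_j` of `gden x`. -/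
noncomputable def poleQ (x : ℝ) (j : ℕ) : ℂ := ⟨-poleB x j, poleB x j⟩

lemma gden_neg (x : ℝ) (z : ℂ) : gden x (-z) = gden x z := by simp [gden]

lemma differentiable_gden (x : ℝ) : Differentiable ℂ (gden x) := by unfold gden; fun_prop

lemma deriv_gden (x : ℝ) {z : ℂ} (hz : gden x z = 0) : deriv (gden x) z = -(2 * x * z) := by
  have h0 : HasDerivAt (fun z : ℂ => (x : ℂ) * z ^ 2) (x * (2 * z)) z := by
    simpa using (hasDerivAt_pow 2 z).const_mul (x : ℂ)
  have h1 := (h0.cexp.add_const (1 : ℂ)).deriv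
  have h2 : exp (x * z ^ 2) = -1 := eq_neg_of_add_eq_zero_left hz
  refine h1.trans ?_
  rw [h2]; ring

lemma gden_ofReal (x t : ℝ) : gden x t = ((Real.exp (x * t ^ 2) + 1 : ℝ) : ℂ) := by
  simp [gden]

lemma gden_ofReal_ne (x t : ℝ) : gden x t ≠ 0 := by
  rw [gden_ofReal]
  exact_mod_cast (by positivity : Real.exp (x * t ^ 2) + 1 ≠ 0)

lemma poleB_pos {x : ℝ} (hx : 0 < x) (j : ℕ) : 0 < poleB x j := by
  have := Real.pi_pos
  unfold poleB; positivity

lemma poleB_sq {x : ℝ} (hx : 0 < x) (j : ℕ) : 2 * x * poleB x j ^ 2 = Real.pi * (2 * j + 1) := by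
  have := Real.pi_pos
  rw [poleB, Real.sq_sqrt (by positivity)]; field_simp

lemma poleB_injective {x : ℝ} (hx : 0 < x) : Function.Injective (poleB x) := by
  intro i j h
  have h1 := poleB_sq hx i
  rw [h, poleB_sq hx j] at h1
  have := mul_left_cancel₀ Real.pi_ne_zero h1
  have h2 : (j : ℝ) = i := by linarith
  exact_mod_cast h2.symm

lemma gden_of_sq {x : ℝ} {z : ℂ} {k : ℤ} (h : x * z ^ 2 = Real.pi * (2 * k + 1) * I) :
    gden x z = 0 := by
  rw [gden, h, show (Real.pi * (2 * k + 1) * I : ℂ) = k * (2 * Real.pi * I) + Real.pi * I by ring,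
    exp_add, exp_int_mul_two_pi_mul_I, exp_pi_mul_I]
  norm_num

lemma poleP_eq (x : ℝ) (j : ℕ) : poleP x j = poleB x j + poleB x j * I := by
  apply Complex.ext <;> simp [poleP]

lemma poleQ_eq (x : ℝ) (j : ℕ) : poleQ x j = -poleB x j + poleB x j * I := by
  apply Complex.ext <;> simp [poleQ]

lemma gden_poleP {x : ℝ} (hx : 0 < x) (j : ℕ) : gden x (poleP x j) = 0 := by
  have h : (2 * x * poleB x j ^ 2 : ℂ) = Real.pi * (2 * j + 1) := by exact_mod_cast poleB_sq hx j
  refine gden_of_sq (k := j) ?_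
  rw [poleP_eq]
  push_cast
  linear_combination I * h + x * (poleB x j : ℂ) ^ 2 * I_sq

lemma gden_poleQ {x : ℝ} (hx : 0 < x) (j : ℕ) : gden x (poleQ x j) = 0 := by
  have h : (2 * x * poleB x j ^ 2 : ℂ) = Real.pi * (2 * j + 1) := by exact_mod_cast poleB_sq hx j
  refine gden_of_sq (k := -j - 1) ?_
  rw [poleQ_eq]
  push_cast
  linear_combination (-I) * h + x * (poleB x j : ℂ) ^ 2 * I_sq

/-- The zeros of `gden x` below height `H`, where `x H² = π M`: they are the four families
`(±1 ± i) b_j` with `j < M`. -/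
lemma gden_zeros {x : ℝ} (hx : 0 < x) {H : ℝ} {M : ℕ} (hH : x * H ^ 2 = Real.pi * M) {z : ℂ}
    (hz : gden x z = 0) (h1 : |z.im| ≤ H) :
    ∃ j < M, z = poleP x j ∨ z = poleQ x j ∨ z = -poleP x j ∨ z = -poleQ x j := by
  have hpi := Real.pi_pos
  have h2 : exp (x * z ^ 2) = exp (Real.pi * I) := by
    rw [exp_pi_mul_I]; exact eq_neg_of_add_eq_zero_left hz
  obtain ⟨k, hk⟩ := exp_eq_exp_iff_exists_int.1 h2
  have hre := congrArg re hk
  have him := congrArg im hk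
  simp [pow_two] at hre him
  have hsq : z.re * z.re = z.im * z.im := by
    rcases hre with h | h
    · exact absurd h hx.ne'
    · linarith
  have hprod : 2 * x * (z.re * z.im) = Real.pi * (2 * k + 1) := by linarith
  obtain ⟨j, hj⟩ : ∃ j : ℕ, |(2 * k + 1 : ℤ)| = 2 * j + 1 := by
    refine ⟨(|2 * k + 1| / 2).toNat, ?_⟩
    rcases abs_cases (2 * k + 1) with ⟨h, _⟩ | ⟨h, _⟩ <;> rw [h] <;> omega
  have hj' : |(2 * k + 1 : ℝ)| = 2 * j + 1 := by exact_mod_cast hj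
  have habs : |z.re| = |z.im| := by
    rw [← sq_eq_sq₀ (abs_nonneg _) (abs_nonneg _), sq_abs, sq_abs]; linarith
  have hb : |z.im| = poleB x j := by
    have h3 : 2 * x * |z.im| ^ 2 = Real.pi * (2 * j + 1) := by
      have h6 := congrArg abs hprod
      rw [abs_mul, abs_mul z.re, habs, abs_of_pos (by positivity : 0 < 2 * x), abs_mul Real.pi,
        abs_of_pos hpi, hj'] at h6
      rw [← h6]; ring
    have h4 := poleB_sq hx j
    have h5 : |z.im| ^ 2 = poleB x j ^ 2 :=
      mul_left_cancel₀ (by positivity : 2 * x ≠ 0) (h3.trans h4.symm)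
    exact (sq_eq_sq₀ (abs_nonneg _) (poleB_pos hx j).le).1 h5
  refine ⟨j, ?_, ?_⟩
  · have h3 : poleB x j ^ 2 ≤ H ^ 2 := by
      rw [← hb]; exact pow_le_pow_left₀ (abs_nonneg _) h1 2
    have h4 := poleB_sq hx j
    have h5 : Real.pi * (2 * j + 1) ≤ Real.pi * (2 * M) := by nlinarith
    have h6 : (2 * j + 1 : ℝ) ≤ 2 * M := le_of_mul_le_mul_left h5 hpi
    have h7 : 2 * j + 1 ≤ 2 * M := by exact_mod_cast h6
    omega
  · rw [hb] at habs
    rcases eq_or_eq_neg_of_abs_eq habs with hr | hr <;>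
      rcases eq_or_eq_neg_of_abs_eq hb with hi | hi
    · exact Or.inl (Complex.ext hr hi)
    · exact Or.inr (Or.inr (Or.inr (Complex.ext (by simp [poleQ, hr]) (by simp [poleQ, hi]))))
    · exact Or.inr (Or.inl (Complex.ext hr hi))
    · exact Or.inr (Or.inr (Or.inl (Complex.ext (by simp [poleP, hr]) (by simp [poleP, hi]))))

lemma poleB_lt {x : ℝ} (hx : 0 < x) {H : ℝ} (hH0 : 0 < H) {M : ℕ}
    (hH : x * H ^ 2 = Real.pi * M) {j : ℕ} (hj : j < M) : poleB x j < H := by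
  have hpi := Real.pi_pos
  have h4 := poleB_sq hx j
  have h7 : (j + 1 : ℝ) ≤ M := by exact_mod_cast hj
  rw [← sq_lt_sq₀ (poleB_pos hx j).le hH0.le]
  have h5 : Real.pi * (2 * j + 1) < Real.pi * (2 * M) := mul_lt_mul_of_pos_left (by linarith) hpi
  nlinarith

/-- On the line `Im z = H` with `x H² = π M` the exponential `e^{x z²}` stays away from `-1`:
it has modulus far from `1` except near `t = ±H`, where its argument is close to a multiple of
`2π`. -/
lemma norm_gden_top {x : ℝ} (hx : 0 < x) {H : ℝ} (hH0 : 0 < H) {M : ℕ}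
    (hH : x * H ^ 2 = Real.pi * M) (t : ℝ) :
    gden x (t + H * I) ≠ 0 ∧
      ‖1 / gden x (t + H * I)‖ ≤ 3 * (1 + H ^ 2 + 1 / x) * (1 + t ^ 2)⁻¹ := by
  set u : ℝ := x * t ^ 2 - x * H ^ 2 with hu
  set θ : ℝ := 2 * x * t * H with hθ
  have hw : (x * (t + H * I) ^ 2 : ℂ) = u + θ * I := by
    rw [hu, hθ]; push_cast; linear_combination (x * H ^ 2 : ℂ) * I_sq
  have hnorm : ‖exp (u + θ * I)‖ = Real.exp u := by rw [norm_exp]; simp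
  have hlow : (1 + max u 0) / 3 ≤ ‖gden x (t + H * I)‖ := by
    rw [gden, hw]
    rcases le_or_gt |u| (1 / 2) with hsmall | hbig
    · obtain ⟨u1, u2⟩ := abs_le.1 hsmall
      have hcos : 0 ≤ Real.cos θ := by
        -- reduce to `t ≥ 0`; there `|θ - 2πM| = 2 |u| H / (t + H) ≤ 1`
        have key : ∀ τ : ℝ, 0 ≤ τ → τ ^ 2 = t ^ 2 → 0 ≤ Real.cos (2 * x * τ * H) := by
          intro τ hτ hτ2
          have e1 : 2 * x * τ * H = 2 * x * H * (τ - H) + M * (2 * Real.pi) := by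
            linear_combination 2 * hH
          rw [e1, Real.cos_add_nat_mul_two_pi]
          have e2 : u = x * (τ - H) * (τ + H) := by rw [hu, ← hτ2]; ring
          have e3 : |2 * x * H * (τ - H)| ≤ 1 := by
            have h6 : |u| = x * |τ - H| * (τ + H) := by
              rw [e2, abs_mul, abs_mul, abs_of_pos hx, abs_of_pos (by linarith : 0 < τ + H)]
            rw [abs_mul, abs_of_pos (by positivity : 0 < 2 * x * H)]
            have : x * |τ - H| * H ≤ x * |τ - H| * (τ + H) := by
              gcongr; linarith
            linarith
          obtain ⟨e4, e5⟩ := abs_le.1 e3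
          exact Real.cos_nonneg_of_mem_Icc
            ⟨by linarith [Real.pi_gt_three], by linarith [Real.pi_gt_three]⟩
        have := key |t| (abs_nonneg t) (sq_abs t)
        rcases abs_choice t with h | h
        · rwa [h] at this
        · rw [h, show 2 * x * -t * H = -θ by rw [hθ]; ring, Real.cos_neg] at this
          exact this
      have h1 : 1 ≤ ‖exp (u + θ * I) + 1‖ := by
        refine le_trans ?_ (re_le_norm _)
        have : (exp (u + θ * I) + 1).re = Real.exp u * Real.cos θ + 1 := by
          rw [add_re, exp_re]; simp
        rw [this]
        have := mul_nonneg (Real.exp_pos u).le hcos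
        linarith
      have : max u 0 ≤ 1 / 2 := max_le u2 (by norm_num)
      linarith
    · rcases lt_abs.1 hbig with h | h
      · have h1 := norm_sub_norm_le (exp (u + θ * I)) (-1)
        rw [sub_neg_eq_add, hnorm, norm_neg, norm_one] at h1
        rw [max_eq_left (by linarith)]
        have := Real.add_one_le_exp u
        linarith
      · have h1 := norm_sub_norm_le (1 : ℂ) (-exp (u + θ * I))
        rw [sub_neg_eq_add, add_comm (1 : ℂ), norm_neg, hnorm, norm_one] at h1
        rw [max_eq_right (by linarith)]
        have h2 : Real.exp u ≤ 2 / 3 := by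
          have h3 : Real.exp u ≤ Real.exp (-(1 / 2)) := Real.exp_le_exp.2 (by linarith)
          have h4 : (3 / 2 : ℝ) ≤ Real.exp (1 / 2) := by
            linarith [Real.add_one_le_exp (1 / 2 : ℝ)]
          rw [Real.exp_neg] at h3
          have h5 := inv_anti₀ (by norm_num : (0 : ℝ) < 3 / 2) h4
          norm_num at h5
          norm_num at h3
          linarith
        linarith
  have hm : 0 ≤ max u 0 := le_max_right _ _
  have hpos : 0 < ‖gden x (t + H * I)‖ := by linarith
  refine ⟨norm_pos_iff.1 hpos, ?_⟩
  rw [norm_div, norm_one, div_le_iff₀ hpos]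
  have ht : 0 < 1 + t ^ 2 := by positivity
  have h8 : 1 + t ^ 2 ≤ (1 + H ^ 2 + 1 / x) * (1 + max u 0) := by
    have h9 : t ^ 2 = u / x + H ^ 2 := by rw [hu]; field_simp; ring
    have h10 : u / x ≤ max u 0 * (1 / x) := by
      rw [← div_eq_mul_one_div]; gcongr; exact le_max_left _ _
    have h11 : 0 < 1 / x := by positivity
    nlinarith [mul_nonneg hm (sq_nonneg H)]
  have hK : 0 < 1 + H ^ 2 + 1 / x := by positivity
  calc 1 = (1 + t ^ 2) * (1 + t ^ 2)⁻¹ := (mul_inv_cancel₀ ht.ne').symm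
    _ ≤ (1 + H ^ 2 + 1 / x) * (1 + max u 0) * (1 + t ^ 2)⁻¹ := by gcongr
    _ = 3 * (1 + H ^ 2 + 1 / x) * (1 + t ^ 2)⁻¹ * ((1 + max u 0) / 3) := by ring
    _ ≤ _ := by gcongr

/-- Bound for `1 / gden` on the vertical lines `Re z = ±N`. -/
lemma norm_gden_side {x : ℝ} (hx : 0 < x) {H N y σ : ℝ} (hHN : H < N) (hy : |y| ≤ H)
    (hσ : σ ^ 2 = N ^ 2) :
    gden x (σ + y * I) ≠ 0 ∧ ‖1 / gden x (σ + y * I)‖ ≤ 1 / (x * (N ^ 2 - H ^ 2)) := by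
  have hH0 : 0 ≤ H := (abs_nonneg y).trans hy
  have hy2 : y ^ 2 ≤ H ^ 2 := sq_le_sq' (by linarith [abs_le.1 hy]) (abs_le.1 hy).2
  have hpos : 0 < x * (N ^ 2 - H ^ 2) := mul_pos hx (by nlinarith)
  have hlow : x * (N ^ 2 - H ^ 2) ≤ ‖gden x (σ + y * I)‖ := by
    have h1 := norm_sub_norm_le (exp (x * (σ + y * I) ^ 2)) (-1)
    rw [sub_neg_eq_add, norm_exp, norm_neg, norm_one] at h1
    have h2 : (x * (σ + y * I) ^ 2 : ℂ).re = x * (N ^ 2 - y ^ 2) := by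
      rw [← hσ]; simp [pow_two]
    rw [h2] at h1
    have h3 := Real.add_one_le_exp (x * (N ^ 2 - y ^ 2))
    have h4 : x * (N ^ 2 - H ^ 2) ≤ x * (N ^ 2 - y ^ 2) := by gcongr
    rw [gden]
    linarith
  have hg : 0 < ‖gden x (σ + y * I)‖ := by linarith
  refine ⟨norm_pos_iff.1 hg, ?_⟩
  rw [norm_div, norm_one]
  gcongr

/-- Real form of the quotient defining `Gfun`, with `ε = e^{-t}`, `c = cos t`, `s = sin t`. -/
lemma G_alg (p b ε c s : ℝ) (hε : 0 < ε) (hcs : c ^ 2 + s ^ 2 = 1) :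
    ∀ Lr Li Dr Di : ℝ, Lr = ε * ((p - b) * c - b * s) → Li = ε * ((p - b) * s + b * c) →
    Dr = Lr - (p + b) → Di = Li + b →
    -2 * (((Lr - Li) * Dr + (Lr + Li) * Di) / (Dr ^ 2 + Di ^ 2)) =
      ((p ^ 2 - 2 * b ^ 2) * (c - s) - ε * (p ^ 2 - 2 * b * p + 2 * b ^ 2)
        - 2 * b * p * (c + s)) /
      (p ^ 2 * ((ε⁻¹ + ε) / 2 - c) + 2 * b * p * ((ε⁻¹ - ε) / 2 + s)
        + 2 * b ^ 2 * ((ε⁻¹ + ε) / 2 + c)) := by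
  intro Lr Li Dr Di hLr hLi hDr hDi
  have hε' := hε.ne'
  have h1 : Dr ^ 2 + Di ^ 2 = 2 * ε * (p ^ 2 * ((ε⁻¹ + ε) / 2 - c)
      + 2 * b * p * ((ε⁻¹ - ε) / 2 + s) + 2 * b ^ 2 * ((ε⁻¹ + ε) / 2 + c)) := by
    rw [hDr, hDi, hLr, hLi]
    field_simp
    linear_combination (ε ^ 2 * ((p - b) ^ 2 + b ^ 2)) * hcs
  have h2 : -2 * ((Lr - Li) * Dr + (Lr + Li) * Di) = 2 * ε * ((p ^ 2 - 2 * b ^ 2) * (c - s)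
      - ε * (p ^ 2 - 2 * b * p + 2 * b ^ 2) - 2 * b * p * (c + s)) := by
    rw [hDr, hDi, hLr, hLi]
    linear_combination (-2 * ε ^ 2 * ((p - b) ^ 2 + b ^ 2)) * hcs
  rw [← mul_div_assoc, h1, h2, mul_div_mul_left _ _ (by positivity)]

/-- The contribution of the pole `ζ` of `1 / gden` to the summation formula. -/
noncomputable def poleTerm (p x : ℝ) (z : ℂ) : ℂ :=
  (kcos p z / ksin p z + I * Real.pi) * (1 / -(2 * x * z))

lemma kcos_conj (p : ℝ) (z : ℂ) : kcos p (starRingEnd ℂ z) = starRingEnd ℂ (kcos p z) := by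
  simp [kcos, ← sin_conj, ← cos_conj]

lemma ksin_conj (p : ℝ) (z : ℂ) : ksin p (starRingEnd ℂ z) = starRingEnd ℂ (ksin p z) := by
  simp [ksin, ← sin_conj, ← cos_conj]

lemma poleTerm_neg_conj (p x : ℝ) (z : ℂ) :
    poleTerm p x (-starRingEnd ℂ z) = starRingEnd ℂ (poleTerm p x z) := by
  simp only [poleTerm, kcos_neg, ksin_neg, kcos_conj, ksin_conj, map_mul, map_add, map_div₀,
    map_neg, map_one, conj_I, conj_ofReal, Complex.conj_ofNat, div_neg, mul_neg, neg_neg]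
  ring

/-- The two poles at height `b_j` together contribute the `j`-th term of the `Gfun` series. -/
lemma poleTerm_add {p x : ℝ} (hp : 0 < p) (hx : 0 < x) (j : ℕ) :
    poleTerm p x (poleP x j) + poleTerm p x (poleQ x j) =
      ((Real.sqrt (Real.pi / (2 * x)) * (Gfun p (Real.pi * (2 * (j + 1) - 1) / x) /
        Real.sqrt (2 * (j + 1) - 1)) : ℝ) : ℂ) := by
  have hpi := Real.pi_pos
  have hQ : poleQ x j = -starRingEnd ℂ (poleP x j) := by
    apply Complex.ext <;> simp [poleP, poleQ]
  rw [hQ, poleTerm_neg_conj, add_conj, ofReal_inj]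
  set b := poleB x j with hb
  have hb0 : 0 < b := poleB_pos hx j
  have hb2 := poleB_sq hx j
  rw [← hb] at hb2
  have hodd : (2 * ((j : ℝ) + 1) - 1) = 2 * j + 1 := by ring
  rw [hodd]
  have ha : Real.pi * (2 * j + 1) / x = 2 * b ^ 2 := by
    rw [← hb2]; field_simp
  have hsq : Real.sqrt (2 * (2 * b ^ 2)) = 2 * b := by
    rw [show 2 * (2 * b ^ 2) = (2 * b) ^ 2 by ring, Real.sqrt_sq (by positivity)]
  have hpre : Real.sqrt (Real.pi / (2 * x)) / Real.sqrt (2 * j + 1) = Real.pi / (2 * x * b) := by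
    have h1 : b = Real.sqrt (Real.pi / (2 * x)) * Real.sqrt (2 * j + 1) := by
      rw [hb, poleB, ← Real.sqrt_mul (by positivity)]; congr 1; ring
    have h2 : Real.sqrt (Real.pi / (2 * x)) ^ 2 = Real.pi / (2 * x) :=
      Real.sq_sqrt (by positivity)
    have h3 : 0 < Real.sqrt (2 * (j : ℝ) + 1) := by positivity
    have h4 : 0 < Real.sqrt (Real.pi / (2 * x)) := by positivity
    rw [h1, div_eq_div_iff h3.ne' (by positivity)]
    field_simp at h2
    linear_combination Real.sqrt (2 * j + 1) * h2
  set ε := Real.exp (-(Real.pi * (2 * b))) with hε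
  have hε0 : 0 < ε := Real.exp_pos _
  have hcosh : Real.cosh (Real.pi * (2 * b)) = (ε⁻¹ + ε) / 2 := by
    rw [Real.cosh_eq, hε, Real.exp_neg, inv_inv]
  have hsinh : Real.sinh (Real.pi * (2 * b)) = (ε⁻¹ - ε) / 2 := by
    rw [Real.sinh_eq, hε, Real.exp_neg, inv_inv]
  set c := Real.cos (Real.pi * (2 * b)) with hc
  set s := Real.sin (Real.pi * (2 * b)) with hs
  have hG := G_alg p b ε c s hε0 (by rw [hc, hs]; exact Real.cos_sq_add_sin_sq _)
    _ _ _ _ rfl rfl rfl rfl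
  have hGf : Gfun p (Real.pi * (2 * j + 1) / x) =
      ((p ^ 2 - 2 * b ^ 2) * (c - s) - ε * (p ^ 2 - 2 * b * p + 2 * b ^ 2)
        - 2 * b * p * (c + s)) /
      (p ^ 2 * ((ε⁻¹ + ε) / 2 - c) + 2 * b * p * ((ε⁻¹ - ε) / 2 + s)
        + 2 * b ^ 2 * ((ε⁻¹ + ε) / 2 + c)) := by
    rw [ha, Gfun, hsq, hcosh, hsinh]
  rw [mul_div_left_comm, hpre, hGf, ← hG]
  have him : 0 < (poleP x j).im := hb0
  have hq : exp (2 * Real.pi * poleP x j * I) = ε * (c + s * I) := by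
    rw [show (2 * Real.pi * poleP x j * I : ℂ) =
      ((-(Real.pi * (2 * b)) : ℝ) : ℂ) + ((Real.pi * (2 * b) : ℝ) : ℂ) * I by
        rw [poleP_eq, ← hb]; push_cast; linear_combination (2 * Real.pi * b : ℂ) * I_sq,
      exp_add, exp_mul_I, ← ofReal_cos, ← ofReal_sin, ← ofReal_exp]
  set L : ℂ := ⟨ε * ((p - b) * c - b * s), ε * ((p - b) * s + b * c)⟩ with hL
  have hL1 : (p + I * poleP x j) * (ε * (c + s * I)) = L := by
    apply Complex.ext <;> simp [hL, poleP_eq, ← hb] <;> ring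
  set d : ℂ := ⟨ε * ((p - b) * c - b * s) - (p + b), ε * ((p - b) * s + b * c) + b⟩ with hd
  have hd1 : L - (p - I * poleP x j) = d := by
    apply Complex.ext <;> simp [hL, hd, poleP_eq, ← hb]
  have hterm : poleTerm p x (poleP x j) =
      ((-(Real.pi / (2 * x * b)) : ℝ) : ℂ) * ((1 + I) * L / d) := by
    rw [poleTerm, kcot_add p (ksin_ne_zero_of_im_pos hp him), hq, hL1, hd1, poleP_eq, ← hb]
    have h1 : (1 / -(2 * x * (b + b * I)) : ℂ) = -((1 - I) / (4 * x * b)) := by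
      have hx' : (x : ℂ) ≠ 0 := by exact_mod_cast hx.ne'
      have hb' : (b : ℂ) ≠ 0 := by exact_mod_cast hb0.ne'
      have hI : (1 + I : ℂ) ≠ 0 := by
        intro h; simpa using congrArg re h
      rw [show (b + b * I : ℂ) = b * (1 + I) by ring]
      field_simp
      linear_combination (-2 : ℂ) * I_sq
    rw [h1]
    push_cast
    have hII : I * (1 - I) = 1 + I := by linear_combination (-1 : ℂ) * I_sq
    calc _ = -(2 * Real.pi / (4 * x * b)) * ((I * (1 - I)) * L / d) := by ring
      _ = _ := by rw [hII]; ring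
  rw [hterm, re_ofReal_mul, div_re, normSq_apply]
  simp [hL, hd]
  ring

/-! ### Residues of `kcos / (ksin · gden)` and of `1 / gden` -/

/-- Residue of `kcos / (ksin · gden)` at a zero `z` of `gden`. -/
noncomputable def poleRes (p x : ℝ) (z : ℂ) : ℂ := kcos p z / ksin p z * (1 / -(2 * x * z))

/-- The weight attached to a real zero `l` of `ksin`, times `1 / (e^{x l²} + 1)`. -/
noncomputable def lamTerm (p x l : ℝ) : ℝ :=
  (p ^ 2 + l ^ 2) / (p * (p + 1 / Real.pi) + l ^ 2) / (Real.exp (x * l ^ 2) + 1)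

lemma poleRes_neg (p x : ℝ) (z : ℂ) : poleRes p x (-z) = poleRes p x z := by
  rw [poleRes, poleRes, kcos_neg, ksin_neg, mul_neg, neg_neg, div_neg, div_neg]; ring

lemma lamTerm_neg (p x l : ℝ) : lamTerm p x (-l) = lamTerm p x l := by simp [lamTerm]

lemma deriv_prod (p x : ℝ) (z : ℂ) : deriv (fun z => ksin p z * gden x z) z =
    deriv (ksin p) z * gden x z + ksin p z * deriv (gden x) z :=
  ((differentiable_ksin p z).hasDerivAt.mul (differentiable_gden x z).hasDerivAt).deriv

lemma residue_real {p l : ℝ} (hp : 0 < p) (x : ℝ)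
    (h : p * Real.sin (Real.pi * l) + l * Real.cos (Real.pi * l) = 0) :
    deriv (fun z => ksin p z * gden x z) l ≠ 0 ∧
    kcos p l / deriv (fun z => ksin p z * gden x z) l = (lamTerm p x l : ℂ) := by
  obtain ⟨h1, h2⟩ := residue_lam hp h
  have h3 : ksin p l = 0 := by rw [ksin_ofReal, h, ofReal_zero]
  have h4 : deriv (fun z => ksin p z * gden x z) l = deriv (ksin p) l * gden x l := by
    rw [deriv_prod, h3, zero_mul, add_zero]
  rw [h4]
  refine ⟨mul_ne_zero h1 (gden_ofReal_ne x l), ?_⟩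
  rw [← div_div, h2, gden_ofReal, ← ofReal_div, lamTerm]

lemma residue_pole {p x : ℝ} (hp : 0 < p) (hx : 0 < x) {z : ℂ} (hz : gden x z = 0)
    (him : z.im ≠ 0) :
    deriv (fun z => ksin p z * gden x z) z ≠ 0 ∧
    kcos p z / deriv (fun z => ksin p z * gden x z) z = poleRes p x z := by
  have hz0 : z ≠ 0 := fun h => him (by simp [h])
  have hx' : (x : ℂ) ≠ 0 := by exact_mod_cast hx.ne'
  have h4 : deriv (fun z => ksin p z * gden x z) z = ksin p z * -(2 * x * z) := by
    rw [deriv_prod, hz, mul_zero, zero_add, deriv_gden x hz]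
  rw [h4]
  refine ⟨mul_ne_zero (ksin_ne_zero_of_im_ne hp him) (neg_ne_zero.2 (by simp [hz0, hx'])), ?_⟩
  rw [← div_div, poleRes, div_eq_mul_one_div (kcos p z / ksin p z)]

/-- The zeros of `gden x` in the upper half-plane with index less than `M`. -/
noncomputable def upperPoles (x : ℝ) (M : ℕ) : Finset ℂ :=
  (Finset.range M).image (poleP x) ∪ (Finset.range M).image (poleQ x)

lemma mem_upperPoles {x : ℝ} {M : ℕ} {z : ℂ} :
    z ∈ upperPoles x M ↔ ∃ j < M, z = poleP x j ∨ z = poleQ x j := by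
  simp only [upperPoles, Finset.mem_union, Finset.mem_image, Finset.mem_range]
  constructor
  · rintro (⟨j, hj, rfl⟩ | ⟨j, hj, rfl⟩)
    · exact ⟨j, hj, Or.inl rfl⟩
    · exact ⟨j, hj, Or.inr rfl⟩
  · rintro ⟨j, hj, rfl | rfl⟩
    · exact Or.inl ⟨j, hj, rfl⟩
    · exact Or.inr ⟨j, hj, rfl⟩

lemma sum_upperPoles {x : ℝ} (hx : 0 < x) (M : ℕ) (f : ℂ → ℂ) :
    ∑ z ∈ upperPoles x M, f z = ∑ j ∈ Finset.range M, (f (poleP x j) + f (poleQ x j)) := by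
  rw [upperPoles, Finset.sum_union, Finset.sum_image, Finset.sum_image, Finset.sum_add_distrib]
  · intro i _ j _ h
    exact poleB_injective hx (congrArg im h)
  · intro i _ j _ h
    exact poleB_injective hx (congrArg im h)
  · rw [Finset.disjoint_left]
    intro z h1 h2
    simp only [Finset.mem_image] at h1 h2
    obtain ⟨i, _, rfl⟩ := h1
    obtain ⟨j, _, h⟩ := h2
    have := congrArg re h
    simp only [poleP, poleQ] at this
    linarith [poleB_pos hx i, poleB_pos hx j]

lemma upperPoles_spec {x : ℝ} (hx : 0 < x) {H : ℝ} (hH0 : 0 < H) {M : ℕ}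
    (hH : x * H ^ 2 = Real.pi * M) {z : ℂ} (hz : z ∈ upperPoles x M) :
    gden x z = 0 ∧ 0 < z.im ∧ z.im < H ∧ |z.re| < H := by
  obtain ⟨j, hj, rfl | rfl⟩ := mem_upperPoles.1 hz
  · refine ⟨gden_poleP hx j, poleB_pos hx j, poleB_lt hx hH0 hH hj, ?_⟩
    rw [poleP, abs_of_pos (poleB_pos hx j)]; exact poleB_lt hx hH0 hH hj
  · refine ⟨gden_poleQ hx j, poleB_pos hx j, poleB_lt hx hH0 hH hj, ?_⟩
    rw [poleQ, abs_neg, abs_of_pos (poleB_pos hx j)]; exact poleB_lt hx hH0 hH hj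

/-- The real zeros of `ksin` in `[-N, N]`. -/
noncomputable def realZeros (lam : ℕ → ℝ) (N : ℕ) : Finset ℝ :=
  {0} ∪ ((Finset.range N).image (fun n => lam (n + 1)) ∪
    (Finset.range N).image (fun n => -lam (n + 1)))

lemma lam_pos {p : ℝ} {lam : ℕ → ℝ}
    (hlam : ∀ n : ℕ, 1 ≤ n → (n : ℝ) - 1 / 2 < lam n ∧ lam n < n ∧
      Real.tan (Real.pi * lam n) = -(lam n) / p)
    (n : ℕ) : 0 < lam (n + 1) := by
  have h := (hlam (n + 1) (by omega)).1
  push_cast at h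
  have : (0 : ℝ) ≤ n := n.cast_nonneg
  linarith

lemma lam_injective {p : ℝ} {lam : ℕ → ℝ}
    (hlam : ∀ n : ℕ, 1 ≤ n → (n : ℝ) - 1 / 2 < lam n ∧ lam n < n ∧
      Real.tan (Real.pi * lam n) = -(lam n) / p) :
    Function.Injective (fun n => lam (n + 1)) := by
  intro i j h
  simp only at h
  obtain ⟨a1, a2, _⟩ := hlam (i + 1) (by omega)
  obtain ⟨b1, b2, _⟩ := hlam (j + 1) (by omega)
  push_cast at a1 a2 b1 b2
  rw [h] at a1 a2
  have h1 : (i : ℝ) < j + 1 := by linarith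
  have h2 : (j : ℝ) < i + 1 := by linarith
  have h1' : i < j + 1 := by exact_mod_cast h1
  have h2' : j < i + 1 := by exact_mod_cast h2
  omega

lemma sum_realZeros {p : ℝ} {lam : ℕ → ℝ}
    (hlam : ∀ n : ℕ, 1 ≤ n → (n : ℝ) - 1 / 2 < lam n ∧ lam n < n ∧
      Real.tan (Real.pi * lam n) = -(lam n) / p)
    (N : ℕ) (f : ℝ → ℂ) : ∑ l ∈ realZeros lam N, f l =
    f 0 + ∑ n ∈ Finset.range N, (f (lam (n + 1)) + f (-lam (n + 1))) := by
  rw [realZeros, Finset.sum_union, Finset.sum_union, Finset.sum_image, Finset.sum_image,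
    Finset.sum_add_distrib, Finset.sum_singleton]
  · intro i _ j _ h
    exact lam_injective hlam (neg_injective h)
  · exact fun i _ j _ h => lam_injective hlam h
  · rw [Finset.disjoint_left]
    intro z h1 h2
    simp only [Finset.mem_image] at h1 h2
    obtain ⟨i, _, rfl⟩ := h1
    obtain ⟨j, _, h⟩ := h2
    linarith [lam_pos hlam i, lam_pos hlam j]
  · rw [Finset.disjoint_left]
    intro z h1 h2
    simp only [Finset.mem_image, Finset.mem_union, Finset.mem_singleton] at h1 h2
    rcases h2 with ⟨i, _, h⟩ | ⟨i, _, h⟩ <;> linarith [lam_pos hlam i]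

lemma realZeros_spec {p : ℝ} (hp : 0 < p) {lam : ℕ → ℝ}
    (hlam : ∀ n : ℕ, 1 ≤ n → (n : ℝ) - 1 / 2 < lam n ∧ lam n < n ∧
      Real.tan (Real.pi * lam n) = -(lam n) / p)
    {N : ℕ} (hN : 1 ≤ N) {l : ℝ} (hl : l ∈ realZeros lam N) :
    p * Real.sin (Real.pi * l) + l * Real.cos (Real.pi * l) = 0 ∧ -(N : ℝ) < l ∧ l < N := by
  have hN' : (1 : ℝ) ≤ N := by exact_mod_cast hN
  have key : ∀ n < N, (p * Real.sin (Real.pi * lam (n + 1)) +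
      lam (n + 1) * Real.cos (Real.pi * lam (n + 1)) = 0) ∧ lam (n + 1) < N := by
    intro n hn
    obtain ⟨a1, a2, a3⟩ := hlam (n + 1) (by omega)
    have : ((n + 1 : ℕ) : ℝ) ≤ N := by exact_mod_cast hn
    exact ⟨ksin_lam hp (cos_ne_zero_of_mem a1 a2) a3, by linarith⟩
  simp only [realZeros, Finset.mem_image, Finset.mem_union, Finset.mem_singleton,
    Finset.mem_range] at hl
  rcases hl with rfl | ⟨n, hn, rfl⟩ | ⟨n, hn, rfl⟩
  · refine ⟨by simp, by linarith, by linarith⟩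
  · obtain ⟨h1, h2⟩ := key n hn
    exact ⟨h1, by linarith [lam_pos hlam n], h2⟩
  · obtain ⟨h1, h2⟩ := key n hn
    refine ⟨?_, by linarith, by linarith [lam_pos hlam n]⟩
    rw [mul_neg, Real.sin_neg, Real.cos_neg]; linarith

lemma mem_realZeros {p : ℝ} (hp : 0 < p) {lam : ℕ → ℝ}
    (hlam : ∀ n : ℕ, 1 ≤ n → (n : ℝ) - 1 / 2 < lam n ∧ lam n < n ∧
      Real.tan (Real.pi * lam n) = -(lam n) / p)
    {N : ℕ} {l : ℝ} (h1 : -(N : ℝ) ≤ l) (h2 : l ≤ N)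
    (h : p * Real.sin (Real.pi * l) + l * Real.cos (Real.pi * l) = 0) : l ∈ realZeros lam N := by
  have key : ∀ t : ℝ, 0 < t → t ≤ N →
      p * Real.sin (Real.pi * t) + t * Real.cos (Real.pi * t) = 0 →
      ∃ n < N, lam (n + 1) = t := by
    intro t ht htN h0
    obtain ⟨n, hn, b1, b2, b3⟩ := pos_zero_mem hp ht h0
    obtain ⟨a1, a2, a3⟩ := hlam n hn
    obtain ⟨m, rfl⟩ : ∃ m, n = m + 1 := ⟨n - 1, by omega⟩
    refine ⟨m, ?_, lam_unique hp a1 a2 b1 b2 a3 b3⟩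
    push_cast at b1
    have : (m : ℝ) < N := by linarith
    exact_mod_cast this
  simp only [realZeros, Finset.mem_image, Finset.mem_union, Finset.mem_singleton,
    Finset.mem_range]
  rcases lt_trichotomy l 0 with hl | hl | hl
  · obtain ⟨n, hn, e⟩ := key (-l) (by linarith) (by linarith)
      (by rw [mul_neg, Real.sin_neg, Real.cos_neg]; linarith)
    exact Or.inr (Or.inr ⟨n, hn, by rw [e, neg_neg]⟩)
  · exact Or.inl hl
  · obtain ⟨n, hn, e⟩ := key l hl h2 h
    exact Or.inr (Or.inl ⟨n, hn, e⟩)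

/-- Residue theorem for `kcos / (ksin · gden)` on the rectangle `[-N, N] × [-H, H]`. -/
lemma rectInt_full {p : ℝ} (hp : 0 < p) {lam : ℕ → ℝ}
    (hlam : ∀ n : ℕ, 1 ≤ n → (n : ℝ) - 1 / 2 < lam n ∧ lam n < n ∧
      Real.tan (Real.pi * lam n) = -(lam n) / p)
    {x : ℝ} (hx : 0 < x) {H : ℝ} (hH0 : 0 < H) {M : ℕ}
    (hH : x * H ^ 2 = Real.pi * M) {N : ℕ} (hHN : H < N) (hN : 1 ≤ N) :
    rectInt (fun z => kcos p z / (ksin p z * gden x z)) (-N) N (-H) H =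
      2 * Real.pi * I * (lamTerm p x 0 + 2 * ∑ n ∈ Finset.range N, (lamTerm p x (lam (n + 1)) : ℂ)
        + 2 * ∑ j ∈ Finset.range M, (poleRes p x (poleP x j) + poleRes p x (poleQ x j))) := by
  classical
  set R : Finset ℂ := (realZeros lam N).image (fun l : ℝ => (l : ℂ)) with hR
  set U := upperPoles x M with hU
  set V := U.image (fun z => -z) with hV
  have hRim : ∀ z ∈ R, z.im = 0 := by
    intro z hz
    obtain ⟨l, _, rfl⟩ := Finset.mem_image.1 hz
    simp
  have hUim : ∀ z ∈ U, 0 < z.im := fun z hz => (upperPoles_spec hx hH0 hH hz).2.1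
  have hVim : ∀ z ∈ V, z.im < 0 := by
    intro z hz
    obtain ⟨u, hu, rfl⟩ := Finset.mem_image.1 hz
    have := hUim u hu
    simpa using this
  have hres := rectInt_residue (a := -N) (b := N) (c := -H) (d := H) (by linarith) (by linarith)
    (R ∪ (U ∪ V)) (kcos p) (fun z => ksin p z * gden x z) (differentiable_kcos p)
    ((differentiable_ksin p).mul (differentiable_gden x)) ?_ ?_
  · rw [hres, Finset.sum_union, Finset.sum_union]
    · congr 1
      have e1 : ∑ z ∈ R, kcos p z / deriv (fun z => ksin p z * gden x z) z =
          lamTerm p x 0 + 2 * ∑ n ∈ Finset.range N, (lamTerm p x (lam (n + 1)) : ℂ) := by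
        rw [hR, Finset.sum_image (fun a _ b _ h => ofReal_injective h)]
        rw [Finset.sum_congr rfl
          (fun l hl => (residue_real hp x (realZeros_spec hp hlam hN hl).1).2),
          sum_realZeros hlam N (fun l => (lamTerm p x l : ℂ))]
        simp only [lamTerm_neg, ← two_mul, Finset.mul_sum]
      have e2 : ∑ z ∈ U, kcos p z / deriv (fun z => ksin p z * gden x z) z =
          ∑ j ∈ Finset.range M, (poleRes p x (poleP x j) + poleRes p x (poleQ x j)) := by
        rw [← sum_upperPoles hx M (poleRes p x)]
        exact Finset.sum_congr rfl fun z hz =>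
          (residue_pole hp hx (upperPoles_spec hx hH0 hH hz).1 (hUim z hz).ne').2
      have e3 : ∑ z ∈ V, kcos p z / deriv (fun z => ksin p z * gden x z) z =
          ∑ j ∈ Finset.range M, (poleRes p x (poleP x j) + poleRes p x (poleQ x j)) := by
        rw [← sum_upperPoles hx M (poleRes p x), hV,
          Finset.sum_image (fun a _ b _ h => neg_injective h)]
        refine Finset.sum_congr rfl fun z hz => ?_
        have hz' : gden x (-z) = 0 := by rw [gden_neg]; exact (upperPoles_spec hx hH0 hH hz).1
        rw [(residue_pole hp hx hz' (by simpa using (hUim z hz).ne')).2, poleRes_neg]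
      rw [e1, e2, e3]; ring
    · rw [Finset.disjoint_left]
      intro z h1 h2
      linarith [hUim z h1, hVim z h2]
    · rw [Finset.disjoint_left]
      intro z h1 h2
      rcases Finset.mem_union.1 h2 with h | h
      · linarith [hRim z h1, hUim z h]
      · linarith [hRim z h1, hVim z h]
  · intro s hs
    rcases Finset.mem_union.1 hs with hs | hs
    · obtain ⟨l, hl, rfl⟩ := Finset.mem_image.1 hs
      obtain ⟨h1, h2, h3⟩ := realZeros_spec hp hlam hN hl
      refine ⟨⟨h2, h3, by simpa using hH0, by simpa using hH0⟩, ?_, (residue_real hp x h1).1⟩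
      rw [ksin_ofReal, h1, ofReal_zero, zero_mul]
    · rcases Finset.mem_union.1 hs with hs | hs
      · obtain ⟨h1, h2, h3, h4⟩ := upperPoles_spec hx hH0 hH hs
        obtain ⟨h5, h6⟩ := abs_lt.1 h4
        refine ⟨⟨by linarith, by linarith, by linarith, h3⟩, ?_,
          (residue_pole hp hx h1 h2.ne').1⟩
        rw [h1, mul_zero]
      · obtain ⟨u, hu, rfl⟩ := Finset.mem_image.1 hs
        obtain ⟨h1, h2, h3, h4⟩ := upperPoles_spec hx hH0 hH hu
        obtain ⟨h5, h6⟩ := abs_lt.1 h4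
        have h1' : gden x (-u) = 0 := by rw [gden_neg]; exact h1
        refine ⟨⟨?_, ?_, ?_, ?_⟩, ?_, (residue_pole hp hx h1' (by simpa using h2.ne')).1⟩
        · rw [neg_re]; linarith
        · rw [neg_re]; linarith
        · rw [neg_im]; linarith
        · rw [neg_im]; linarith
        · rw [h1', mul_zero]
  · intro z z1 z2 z3 z4 hz
    rcases mul_eq_zero.1 hz with h | h
    · have him : z.im = 0 := by
        by_contra h0
        exact ksin_ne_zero_of_im_ne hp h0 h
      have hzr : z = (z.re : ℂ) := Complex.ext (by simp) (by simpa using him)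
      rw [hzr, ksin_ofReal] at h
      refine Finset.mem_union_left _ ?_
      rw [hzr]
      exact Finset.mem_image_of_mem _ (mem_realZeros hp hlam z1 z2 (by exact_mod_cast h))
    · refine Finset.mem_union_right _ ?_
      obtain ⟨j, hj, h | h | h | h⟩ := gden_zeros hx hH h (abs_le.2 ⟨z3, z4⟩)
      · exact Finset.mem_union_left _ (mem_upperPoles.2 ⟨j, hj, Or.inl h⟩)
      · exact Finset.mem_union_left _ (mem_upperPoles.2 ⟨j, hj, Or.inr h⟩)
      · exact Finset.mem_union_right _
          (Finset.mem_image.2 ⟨_, mem_upperPoles.2 ⟨j, hj, Or.inl rfl⟩, h.symm⟩)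
      · exact Finset.mem_union_right _
          (Finset.mem_image.2 ⟨_, mem_upperPoles.2 ⟨j, hj, Or.inr rfl⟩, h.symm⟩)

/-- Residue theorem for `1 / gden` on the rectangle `[-N, N] × [0, H]`. -/
lemma rectInt_upper {x : ℝ} (hx : 0 < x) {H : ℝ} (hH0 : 0 < H) {M : ℕ}
    (hH : x * H ^ 2 = Real.pi * M) {N : ℕ} (hHN : H < N) :
    rectInt (fun z => 1 / gden x z) (-N) N 0 H =
      2 * Real.pi * I * ∑ j ∈ Finset.range M,
        (1 / -(2 * x * poleP x j) + 1 / -(2 * x * poleQ x j)) := by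
  have hx' : (x : ℂ) ≠ 0 := by exact_mod_cast hx.ne'
  have hres := rectInt_residue (a := -N) (b := N) (c := 0) (d := H) (by linarith) hH0.le
    (upperPoles x M) (fun _ => 1) (gden x) (differentiable_const _) (differentiable_gden x) ?_ ?_
  · rw [hres, ← sum_upperPoles hx M (fun z => 1 / -(2 * x * z))]
    congr 1
    refine Finset.sum_congr rfl fun z hz => ?_
    rw [deriv_gden x (upperPoles_spec hx hH0 hH hz).1]
  · intro s hs
    obtain ⟨h1, h2, h3, h4⟩ := upperPoles_spec hx hH0 hH hs
    obtain ⟨h5, h6⟩ := abs_lt.1 h4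
    refine ⟨⟨by linarith, by linarith, h2, h3⟩, h1, ?_⟩
    have hs0 : s ≠ 0 := fun h => h2.ne' (by simp [h])
    rw [deriv_gden x h1]
    exact neg_ne_zero.2 (by simp [hs0, hx'])
  · intro z z1 z2 z3 z4 hz
    obtain ⟨j, hj, h | h | h | h⟩ := gden_zeros hx hH hz (abs_le.2 ⟨by linarith, z4⟩)
    · exact mem_upperPoles.2 ⟨j, hj, Or.inl h⟩
    · exact mem_upperPoles.2 ⟨j, hj, Or.inr h⟩
    · rw [h, neg_im, poleP] at z3
      simp only at z3
      linarith [poleB_pos hx j]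
    · rw [h, neg_im, poleQ] at z3
      simp only at z3
      linarith [poleB_pos hx j]

/-! ### The truncated summation formula -/

/-- The boundary integral of an odd function over a centred rectangle is twice the contribution
of its top and right edges. -/
lemma rectInt_odd {φ : ℂ → ℂ} (hφ : ∀ z, φ (-z) = -φ z) (N H : ℝ) :
    rectInt φ (-N) N (-H) H =
      -2 * (∫ t in (-N)..N, φ (t + H * I)) + 2 * I * ∫ y in (-H)..H, φ (N + y * I) := by
  have e1 : ∫ t in (-N)..N, φ (t + ((-H : ℝ) : ℂ) * I) = -∫ t in (-N)..N, φ (t + H * I) := by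
    have h := intervalIntegral.integral_comp_neg (a := -N) (b := N) (fun t : ℝ => φ (t + H * I))
    rw [neg_neg] at h
    rw [← h, ← intervalIntegral.integral_neg]
    refine intervalIntegral.integral_congr fun t _ => ?_
    rw [← hφ]; congr 1; push_cast; ring
  have e2 : ∫ y in (-H)..H, φ (((-N : ℝ) : ℂ) + y * I) = -∫ y in (-H)..H, φ (N + y * I) := by
    have h := intervalIntegral.integral_comp_neg (a := -H) (b := H) (fun y : ℝ => φ (N + y * I))
    rw [neg_neg] at h
    rw [← h, ← intervalIntegral.integral_neg]
    refine intervalIntegral.integral_congr fun t _ => ?_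
    rw [← hφ]; congr 1; push_cast; ring
  rw [rectInt, e1, e2]; ring

/-- The truncated summation formula with explicit remainder. -/
lemma finite_identity {p : ℝ} (hp : 0 < p) {lam : ℕ → ℝ}
    (hlam : ∀ n : ℕ, 1 ≤ n → (n : ℝ) - 1 / 2 < lam n ∧ lam n < n ∧
      Real.tan (Real.pi * lam n) = -(lam n) / p)
    {x : ℝ} (hx : 0 < x) {H : ℝ} (hH0 : 0 < H) {M : ℕ}
    (hH : x * H ^ 2 = Real.pi * M) {N : ℕ} (hHN : H < N) (hN : 1 ≤ N) :
    2 * Real.pi * I * (∑ n ∈ Finset.range N, (lamTerm p x (lam (n + 1)) : ℂ) + lamTerm p x 0 / 2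
      - (∫ t in (-N : ℝ)..N, 1 / gden x t) / 2
      + ∑ j ∈ Finset.range M, (poleTerm p x (poleP x j) + poleTerm p x (poleQ x j))) =
    -(∫ t in (-N : ℝ)..N, (kcos p (t + H * I) / ksin p (t + H * I) + I * Real.pi) *
        (1 / gden x (t + H * I)))
      + I * (∫ y in (-H)..H, kcos p (N + y * I) / ksin p (N + y * I) * (1 / gden x (N + y * I)))
      - Real.pi * ((∫ y in (0 : ℝ)..H, 1 / gden x (N + y * I))
        - ∫ y in (0 : ℝ)..H, 1 / gden x (((-N : ℝ) : ℂ) + y * I)) := by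
  have h1 := rectInt_full hp hlam hx hH0 hH hHN hN
  have hodd : ∀ z, kcos p (-z) / (ksin p (-z) * gden x (-z)) =
      -(kcos p z / (ksin p z * gden x z)) := by
    intro z; rw [kcos_neg, ksin_neg, gden_neg, neg_mul, div_neg]
  rw [rectInt_odd (φ := fun z => kcos p z / (ksin p z * gden x z)) hodd] at h1
  have h2 := rectInt_upper hx hH0 hH hHN
  rw [rectInt] at h2
  simp only [ofReal_zero, zero_mul, add_zero] at h2
  have him : ∀ t : ℝ, 0 < (t + H * I : ℂ).im := by intro t; simpa using hH0
  have hline : Continuous fun t : ℝ => (t + H * I : ℂ) := by fun_prop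
  have hcg : Continuous fun t : ℝ => 1 / gden x (t + H * I) :=
    continuous_const.div ((differentiable_gden x).continuous.comp hline)
      (fun t => (norm_gden_top hx hH0 hH t).1)
  have hcF : Continuous fun t : ℝ => kcos p (t + H * I) / ksin p (t + H * I) :=
    ((differentiable_kcos p).continuous.comp hline).div
      ((differentiable_ksin p).continuous.comp hline)
      (fun t => ksin_ne_zero_of_im_pos hp (him t))
  have e1 : ∫ t in (-N : ℝ)..N, (kcos p (t + H * I) / ksin p (t + H * I) + I * Real.pi) *
        (1 / gden x (t + H * I)) =
      (∫ t in (-N : ℝ)..N, kcos p (t + H * I) / (ksin p (t + H * I) * gden x (t + H * I)))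
      + I * Real.pi * ∫ t in (-N : ℝ)..N, 1 / gden x (t + H * I) := by
    rw [← intervalIntegral.integral_const_mul, ← intervalIntegral.integral_add]
    · refine intervalIntegral.integral_congr fun t _ => ?_
      rw [← div_div, add_mul, div_eq_mul_one_div (kcos p _ / ksin p _) (gden x _)]
    · simp only [← div_div]
      simp only [div_eq_mul_one_div (kcos p _ / ksin p _) (gden x _)]
      exact (hcF.mul hcg).intervalIntegrable _ _
    · exact (continuous_const.mul hcg).intervalIntegrable _ _
  have e2 : ∫ y in (-H)..H, kcos p (N + y * I) / ksin p (N + y * I) * (1 / gden x (N + y * I)) =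
      ∫ y in (-H)..H, kcos p (((N : ℝ) : ℂ) + y * I) /
        (ksin p (((N : ℝ) : ℂ) + y * I) * gden x (((N : ℝ) : ℂ) + y * I)) := by
    refine intervalIntegral.integral_congr fun t _ => ?_
    simp only [ofReal_natCast]
    rw [← div_div, div_eq_mul_one_div (kcos p _ / ksin p _) (gden x _)]
  have e3 : ∑ j ∈ Finset.range M, (poleTerm p x (poleP x j) + poleTerm p x (poleQ x j)) =
      ∑ j ∈ Finset.range M, (poleRes p x (poleP x j) + poleRes p x (poleQ x j)) +
      I * Real.pi * ∑ j ∈ Finset.range M,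
        (1 / -(2 * x * poleP x j) + 1 / -(2 * x * poleQ x j)) := by
    rw [Finset.mul_sum, ← Finset.sum_add_distrib]
    refine Finset.sum_congr rfl fun j _ => ?_
    simp only [poleTerm, poleRes]; ring
  rw [e1, e2, e3]
  simp only [ofReal_natCast] at h1 h2 ⊢
  linear_combination (-1 / 2 : ℂ) * h1 - I * Real.pi * h2
    + Real.pi * ((∫ y in (0 : ℝ)..H, 1 / gden x (N + y * I))
        - ∫ y in (0 : ℝ)..H, 1 / gden x (((-N : ℝ) : ℂ) + y * I)) * I_sq

/-- Bound for the remainder of the truncated formula. The first summand comes from the top edge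
and does not depend on `N`; the second comes from the vertical edges and vanishes as `N → ∞`. -/
lemma norm_finite_le {p : ℝ} (hp : 0 < p) {lam : ℕ → ℝ}
    (hlam : ∀ n : ℕ, 1 ≤ n → (n : ℝ) - 1 / 2 < lam n ∧ lam n < n ∧
      Real.tan (Real.pi * lam n) = -(lam n) / p)
    {x : ℝ} (hx : 0 < x) {H : ℝ} (hH0 : 0 < H) {M : ℕ}
    (hH : x * H ^ 2 = Real.pi * M) {N : ℕ} (hHN : H < N) (hN : 1 ≤ N) :
    ‖∑ n ∈ Finset.range N, (lamTerm p x (lam (n + 1)) : ℂ) + lamTerm p x 0 / 2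
      - (∫ t in (-N : ℝ)..N, 1 / gden x t) / 2
      + ∑ j ∈ Finset.range M, (poleTerm p x (poleP x j) + poleTerm p x (poleQ x j))‖ ≤
    (2 * Real.pi)⁻¹ * (2 * Real.pi * Real.exp (-(2 * Real.pi * H)) /
        (1 - Real.exp (-(2 * Real.pi * H))) * (3 * (1 + H ^ 2 + 1 / x)) * Real.pi
      + ((2 * Real.pi * (p + H + 1) + Real.pi) * (2 * H) + 2 * Real.pi * H) *
        (1 / (x * ((N : ℝ) ^ 2 - H ^ 2)))) := by
  have hpi := Real.pi_pos
  set ε := 1 / (x * ((N : ℝ) ^ 2 - H ^ 2)) with hε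
  set K := 2 * Real.pi * Real.exp (-(2 * Real.pi * H)) /
        (1 - Real.exp (-(2 * Real.pi * H))) with hK
  have hε0 : 0 ≤ ε := by
    have : 0 < (N : ℝ) ^ 2 - H ^ 2 := by nlinarith
    positivity
  have hq : Real.exp (-(2 * Real.pi * H)) < 1 := by
    rw [Real.exp_lt_one_iff]; have := mul_pos hpi hH0; linarith
  have hK0 : 0 ≤ K := by
    have : 0 < 1 - Real.exp (-(2 * Real.pi * H)) := by linarith
    positivity
  have him : ∀ t : ℝ, (t + H * I : ℂ).im = H := by intro t; simp
  have hfin := congrArg norm (finite_identity hp hlam hx hH0 hH hHN hN)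
  rw [norm_mul] at hfin
  have hn : ‖(2 * Real.pi * I : ℂ)‖ = 2 * Real.pi := by simp [abs_of_pos hpi]
  rw [hn] at hfin
  have hNN : (-N : ℝ) ≤ N := by linarith
  have b1 : ‖∫ t in (-N : ℝ)..N, (kcos p (t + H * I) / ksin p (t + H * I) + I * Real.pi) *
        (1 / gden x (t + H * I))‖ ≤ K * (3 * (1 + H ^ 2 + 1 / x)) * Real.pi := by
    have hdom : Integrable (fun t : ℝ => K * (3 * (1 + H ^ 2 + 1 / x)) * (1 + t ^ 2)⁻¹) :=
      integrable_inv_one_add_sq.const_mul _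
    calc _ ≤ ∫ t in (-N : ℝ)..N, K * (3 * (1 + H ^ 2 + 1 / x)) * (1 + t ^ 2)⁻¹ := by
          refine intervalIntegral.norm_integral_le_of_norm_le hNN
            (Eventually.of_forall fun t _ => ?_) hdom.intervalIntegrable
          rw [norm_mul]
          have k1 := norm_kcot_add_le hp (z := t + H * I) (by rw [him]; exact hH0)
          rw [him] at k1
          have k2 := (norm_gden_top hx hH0 hH t).2
          rw [mul_assoc K]
          exact mul_le_mul k1 k2 (norm_nonneg _) hK0
      _ ≤ ∫ t : ℝ, K * (3 * (1 + H ^ 2 + 1 / x)) * (1 + t ^ 2)⁻¹ := by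
          rw [intervalIntegral.integral_of_le hNN]
          exact setIntegral_le_integral hdom (Eventually.of_forall fun t => by positivity)
      _ = _ := by rw [integral_const_mul, integral_univ_inv_one_add_sq]
  have b2 : ‖∫ y in (-H)..H, kcos p (N + y * I) / ksin p (N + y * I) *
      (1 / gden x (N + y * I))‖ ≤ (2 * Real.pi * (p + H + 1) + Real.pi) * ε * (2 * H) := by
    have := intervalIntegral.norm_integral_le_of_norm_le_const (a := -H) (b := H)
      (C := (2 * Real.pi * (p + H + 1) + Real.pi) * ε)
      (f := fun y : ℝ => kcos p (N + y * I) / ksin p (N + y * I) * (1 / gden x (N + y * I))) ?_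
    · rwa [sub_neg_eq_add, ← two_mul, abs_of_pos (by positivity : 0 < 2 * H)] at this
    · intro y hy
      rw [uIoc_of_le (by linarith)] at hy
      have hy' : |y| ≤ H := abs_le.2 ⟨hy.1.le, hy.2⟩
      rw [norm_mul]
      have k1 := (kcot_side hp hN y).2
      have k2 := (norm_gden_side hx (σ := N) hHN hy' rfl).2
      rw [ofReal_natCast] at k2
      refine mul_le_mul (k1.trans ?_) k2 (norm_nonneg _) (by positivity)
      gcongr
  have b3 : ∀ σ : ℝ, σ ^ 2 = (N : ℝ) ^ 2 →
      ‖∫ y in (0 : ℝ)..H, 1 / gden x (σ + y * I)‖ ≤ ε * H := by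
    intro σ hσ
    have := intervalIntegral.norm_integral_le_of_norm_le_const (a := 0) (b := H) (C := ε)
      (f := fun y : ℝ => 1 / gden x (σ + y * I)) ?_
    · rwa [sub_zero, abs_of_pos hH0] at this
    · intro y hy
      rw [uIoc_of_le hH0.le] at hy
      exact (norm_gden_side hx hHN (abs_le.2 ⟨by linarith [hy.1], hy.2⟩) hσ).2
  have b4 := b3 N rfl
  have b5 := b3 (-N) (by ring)
  rw [ofReal_natCast] at b4
  rw [← mul_le_mul_iff_right₀ (by positivity : 0 < 2 * Real.pi), hfin,
    mul_inv_cancel_left₀ (by positivity)]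
  refine (norm_sub_le _ _).trans ?_
  refine (add_le_add (norm_add_le _ _) le_rfl).trans ?_
  rw [norm_neg, norm_mul, norm_I, one_mul, norm_mul, norm_real, Real.norm_of_nonneg hpi.le]
  have b6 := mul_le_mul_of_nonneg_left ((norm_sub_le _ _).trans (add_le_add b4 b5)) hpi.le
  linarith

/-! ### Passage to the limit -/

lemma kcot_bound_le {b : ℝ} (hb : 0 < b) :
    2 * Real.pi * Real.exp (-(2 * Real.pi * b)) / (1 - Real.exp (-(2 * Real.pi * b))) ≤
      3 / b ^ 4 := by
  have hpi := Real.pi_pos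
  have h3 := Real.pi_gt_three
  set y := 2 * Real.pi * b with hy
  have hy0 : 0 < y := by positivity
  have h1 : 1 + y ^ 4 / 24 ≤ Real.exp y := by
    have h := Real.sum_le_exp_of_nonneg hy0.le 5
    simp only [Finset.sum_range_succ, Finset.sum_range_zero, Nat.factorial] at h
    norm_num at h
    have h2 : 0 ≤ y ^ 2 := by positivity
    have h3 : 0 ≤ y ^ 3 := by positivity
    linarith
  have h2 : 2 * Real.pi * Real.exp (-y) / (1 - Real.exp (-y)) =
      2 * Real.pi / (Real.exp y - 1) := by
    have hne : Real.exp y - 1 ≠ 0 := by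
      have : 0 < y ^ 4 := by positivity
      linarith
    have hne' := (Real.exp_pos y).ne'
    rw [Real.exp_neg]
    field_simp
  rw [h2]
  calc 2 * Real.pi / (Real.exp y - 1) ≤ 2 * Real.pi / (y ^ 4 / 24) := by
        gcongr; linarith
    _ = 3 / (Real.pi ^ 3 * b ^ 4) := by rw [hy]; field_simp; ring
    _ ≤ 3 / b ^ 4 := by
        gcongr
        have : 1 ≤ Real.pi ^ 3 := one_le_pow₀ (by linarith)
        nlinarith [pow_pos hb 4]

/-- The `j`-th term of the `Gfun` series, with its prefactor. -/
noncomputable def gTerm (p x : ℝ) (j : ℕ) : ℝ :=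
  Real.sqrt (Real.pi / (2 * x)) * (Gfun p (Real.pi * (2 * (j + 1) - 1) / x) /
    Real.sqrt (2 * (j + 1) - 1))

lemma norm_poleTerm_le {p x : ℝ} (hp : 0 < p) (hx : 0 < x) {b : ℝ} (hb : 0 < b) {z : ℂ}
    (hz : z.im = b) : ‖poleTerm p x z‖ ≤ 3 / b ^ 4 * (1 / (2 * x * b)) := by
  have h1 := norm_kcot_add_le hp (z := z) (by rw [hz]; exact hb)
  rw [hz] at h1
  rw [poleTerm, norm_mul]
  refine mul_le_mul (h1.trans (kcot_bound_le hb)) ?_ (norm_nonneg _) (by positivity)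
  have h2 : b ≤ ‖z‖ := by
    rw [← hz]; exact (le_abs_self _).trans (abs_im_le_norm z)
  rw [norm_div, norm_one, norm_neg, norm_mul, norm_mul, norm_real, Real.norm_of_nonneg hx.le,
    Complex.norm_ofNat]
  gcongr

lemma summable_gTerm {p x : ℝ} (hp : 0 < p) (hx : 0 < x) : Summable (gTerm p x) := by
  have hpi := Real.pi_pos
  set b0 := poleB x 0 with hb0
  have hb0' : 0 < b0 := poleB_pos hx 0
  have hsum : Summable fun j : ℕ => (12 * x ^ 2 / Real.pi ^ 2 * (1 / (x * b0))) *
      (1 / ((j + 1 : ℕ) : ℝ) ^ 2) :=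
    ((summable_nat_add_iff 1).2 (Real.summable_one_div_nat_pow.2 one_lt_two)).mul_left _
  refine Summable.of_norm_bounded hsum fun j => ?_
  have hb := poleB_pos hx j
  have hb2 := poleB_sq hx j
  have hj : (0 : ℝ) ≤ j := j.cast_nonneg
  have h1 : ‖gTerm p x j‖ ≤ 2 * (3 / poleB x j ^ 4 * (1 / (2 * x * poleB x j))) := by
    have e : ‖gTerm p x j‖ = ‖(gTerm p x j : ℂ)‖ := (norm_real _).symm
    rw [e, gTerm, ← poleTerm_add hp hx j, two_mul]
    exact (norm_add_le _ _).trans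
      (add_le_add (norm_poleTerm_le hp hx hb rfl) (norm_poleTerm_le hp hx hb rfl))
  refine h1.trans ?_
  have hle : b0 ≤ poleB x j := by
    have h0 := poleB_sq hx 0
    rw [← sq_le_sq₀ hb0'.le hb.le]
    have : 2 * x * b0 ^ 2 ≤ 2 * x * poleB x j ^ 2 := by
      rw [hb2, hb0, h0]; push_cast; gcongr
    exact le_of_mul_le_mul_left this (by positivity)
  have h4 : poleB x j ^ 4 = Real.pi ^ 2 * (2 * j + 1) ^ 2 / (4 * x ^ 2) := by
    have : poleB x j ^ 2 = Real.pi * (2 * j + 1) / (2 * x) := by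
      rw [← hb2]; field_simp
    calc poleB x j ^ 4 = (poleB x j ^ 2) ^ 2 := by ring
      _ = _ := by rw [this]; field_simp; ring
  have h5 : Real.pi ^ 2 * (j + 1) ^ 2 / (4 * x ^ 2) ≤ poleB x j ^ 4 := by
    rw [h4]; gcongr; linarith
  calc 2 * (3 / poleB x j ^ 4 * (1 / (2 * x * poleB x j)))
      ≤ 2 * (3 / (Real.pi ^ 2 * (j + 1) ^ 2 / (4 * x ^ 2)) * (1 / (2 * x * b0))) := by gcongr
    _ = _ := by push_cast; field_simp; ring

lemma summable_lamTerm {p : ℝ} (hp : 0 < p) {lam : ℕ → ℝ}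
    (hlam : ∀ n : ℕ, 1 ≤ n → (n : ℝ) - 1 / 2 < lam n ∧ lam n < n ∧
      Real.tan (Real.pi * lam n) = -(lam n) / p)
    {x : ℝ} (hx : 0 < x) : Summable fun n => lamTerm p x (lam (n + 1)) := by
  have hpi := Real.pi_pos
  have hsum : Summable fun j : ℕ => (4 / x) * (1 / ((j + 1 : ℕ) : ℝ) ^ 2) :=
    ((summable_nat_add_iff 1).2 (Real.summable_one_div_nat_pow.2 one_lt_two)).mul_left _
  refine Summable.of_nonneg_of_le (fun n => ?_) (fun n => ?_) hsum
  · unfold lamTerm; positivity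
  · set l := lam (n + 1) with hl
    have hn : (0 : ℝ) ≤ n := n.cast_nonneg
    have h1 : ((n : ℝ) + 1) / 2 ≤ l := by
      have := (hlam (n + 1) (by omega)).1
      push_cast at this
      linarith
    have h2 : (p ^ 2 + l ^ 2) / (p * (p + 1 / Real.pi) + l ^ 2) ≤ 1 := by
      rw [div_le_one (by positivity)]
      have : 0 < p * (1 / Real.pi) := by positivity
      nlinarith
    have h3 : x * (((n : ℝ) + 1) / 2) ^ 2 ≤ Real.exp (x * l ^ 2) + 1 := by
      have h4 := Real.add_one_le_exp (x * l ^ 2)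
      have h5 : x * (((n : ℝ) + 1) / 2) ^ 2 ≤ x * l ^ 2 := by gcongr
      linarith
    calc lamTerm p x l ≤ 1 / (x * (((n : ℝ) + 1) / 2) ^ 2) := by
          unfold lamTerm; gcongr
      _ = _ := by push_cast; field_simp; norm_num

/-- The summation formula with `M` poles, up to an explicit error. -/
lemma abs_partial_le {p : ℝ} (hp : 0 < p) {lam : ℕ → ℝ}
    (hlam : ∀ n : ℕ, 1 ≤ n → (n : ℝ) - 1 / 2 < lam n ∧ lam n < n ∧
      Real.tan (Real.pi * lam n) = -(lam n) / p)
    {x : ℝ} (hx : 0 < x) {H : ℝ} (hH0 : 0 < H) {M : ℕ}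
    (hH : x * H ^ 2 = Real.pi * M) :
    |∑' n, lamTerm p x (lam (n + 1)) + lamTerm p x 0 / 2
      - (∫ t in Ioi (0 : ℝ), 1 / (Real.exp (x * t ^ 2) + 1))
      + ∑ j ∈ Finset.range M, gTerm p x j| ≤
    (2 * Real.pi)⁻¹ * (3 / H ^ 4 * (3 * (1 + H ^ 2 + 1 / x)) * Real.pi) := by
  have hpi := Real.pi_pos
  set g : ℝ → ℝ := fun t => 1 / (Real.exp (x * t ^ 2) + 1) with hg
  have hI : Tendsto (fun N : ℕ => ∫ t in (-N : ℝ)..N, g t) atTop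
      (𝓝 (2 * ∫ t in Ioi (0 : ℝ), g t)) := by
    have h1 : ∫ t, g t = 2 * ∫ t in Ioi (0 : ℝ), g t := by
      rw [← integral_comp_abs]; simp [hg]
    rw [← h1]
    exact intervalIntegral_tendsto_integral (integrable_fermi_sq hx)
      (tendsto_neg_atTop_atBot.comp tendsto_natCast_atTop_atTop) tendsto_natCast_atTop_atTop
  have hS := (summable_lamTerm hp hlam hx).hasSum.tendsto_sum_nat
  have hL := (((hS.add_const (lamTerm p x 0 / 2)).sub (hI.div_const 2)).add_const
    (∑ j ∈ Finset.range M, gTerm p x j)).abs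
  have hpos : Tendsto (fun N : ℕ => 1 / (x * ((N : ℝ) ^ 2 - H ^ 2))) atTop (𝓝 0) := by
    refine Tendsto.div_atTop tendsto_const_nhds (Tendsto.const_mul_atTop hx ?_)
    exact tendsto_atTop_add_const_right _ _
      ((tendsto_pow_atTop two_ne_zero).comp tendsto_natCast_atTop_atTop)
  have hR := ((hpos.const_mul ((2 * Real.pi * (p + H + 1) + Real.pi) * (2 * H) +
    2 * Real.pi * H)).const_add (2 * Real.pi * Real.exp (-(2 * Real.pi * H)) /
        (1 - Real.exp (-(2 * Real.pi * H))) * (3 * (1 + H ^ 2 + 1 / x)) * Real.pi)).const_mul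
    ((2 * Real.pi)⁻¹)
  rw [mul_div_cancel_left₀ _ (two_ne_zero)] at hL
  have hfin := le_of_tendsto_of_tendsto hL hR ?_
  · refine hfin.trans ?_
    rw [mul_zero, add_zero]
    exact mul_le_mul_of_nonneg_left (mul_le_mul_of_nonneg_right (mul_le_mul_of_nonneg_right
      (kcot_bound_le hH0) (by positivity)) hpi.le) (by positivity)
  · filter_upwards [eventually_ge_atTop 1,
      tendsto_natCast_atTop_atTop.eventually_gt_atTop H] with N hN hHN
    refine le_trans (le_of_eq ?_) (norm_finite_le hp hlam hx hH0 hH hHN hN)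
    rw [← Real.norm_eq_abs, ← norm_real]
    congr 1
    push_cast
    congr 1
    · congr 2
      rw [← intervalIntegral.integral_ofReal]
      refine intervalIntegral.integral_congr fun t _ => ?_
      simp only [hg, gden_ofReal]
      push_cast
      rfl
    · refine Finset.sum_congr rfl fun j _ => ?_
      rw [poleTerm_add hp hx j, gTerm]

lemma tsum_gTerm {p : ℝ} (hp : 0 < p) {lam : ℕ → ℝ}
    (hlam : ∀ n : ℕ, 1 ≤ n → (n : ℝ) - 1 / 2 < lam n ∧ lam n < n ∧
      Real.tan (Real.pi * lam n) = -(lam n) / p)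
    {x : ℝ} (hx : 0 < x) : ∑' j, gTerm p x j =
    -(∑' n, lamTerm p x (lam (n + 1)) + lamTerm p x 0 / 2
      - (∫ t in Ioi (0 : ℝ), 1 / (Real.exp (x * t ^ 2) + 1))) := by
  have hpi := Real.pi_pos
  set C := ∑' n, lamTerm p x (lam (n + 1)) + lamTerm p x 0 / 2
      - (∫ t in Ioi (0 : ℝ), 1 / (Real.exp (x * t ^ 2) + 1)) with hC
  have h1 := (summable_gTerm hp hx).hasSum.tendsto_sum_nat
  refine tendsto_nhds_unique h1 ?_
  have h2 : Tendsto (fun M : ℕ => C + ∑ j ∈ Finset.range M, gTerm p x j) atTop (𝓝 0) := by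
    set k := 9 / 2 * (x ^ 2 / Real.pi ^ 2) with hk
    have hb : Tendsto (fun M : ℕ => k * (1 + 1 / x) / (M : ℝ) ^ 2 + k * (Real.pi / x) / M)
        atTop (𝓝 0) := by
      have a1 : Tendsto (fun M : ℕ => k * (1 + 1 / x) / (M : ℝ) ^ 2) atTop (𝓝 0) :=
        tendsto_const_nhds.div_atTop
          ((tendsto_pow_atTop two_ne_zero).comp tendsto_natCast_atTop_atTop)
      have a2 : Tendsto (fun M : ℕ => k * (Real.pi / x) / (M : ℝ)) atTop (𝓝 0) :=
        tendsto_const_nhds.div_atTop tendsto_natCast_atTop_atTop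
      simpa using a1.add a2
    refine squeeze_zero_norm' ?_ hb
    filter_upwards [eventually_ge_atTop 1] with M hM
    have hM' : (0 : ℝ) < M := by exact_mod_cast hM
    set H := Real.sqrt (Real.pi * M / x) with hHdef
    have hH0 : 0 < H := by positivity
    have hH2 : H ^ 2 = Real.pi * M / x := Real.sq_sqrt (by positivity)
    have hH : x * H ^ 2 = Real.pi * M := by rw [hH2]; field_simp
    refine (abs_partial_le hp hlam hx hH0 hH).trans (le_of_eq ?_)
    rw [show H ^ 4 = (H ^ 2) ^ 2 by ring, hH2, hk]
    field_simp
    ring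
  have h3 := h2.const_add (-C)
  simpa using h3

end Helpers

theorem ramanujan_zeta_half_koshliakov_plus
    (p : ℝ) (hp : 0 < p) (lam : ℕ → ℝ)
    (hlam : ∀ n : ℕ, 1 ≤ n → (n : ℝ) - 1 / 2 < lam n ∧ lam n < n ∧
      Real.tan (Real.pi * lam n) = -(lam n) / p)
    (x : ℝ) (hx : 0 < x) :
    -(∑' n : ℕ, (p ^ 2 + lam (n + 1) ^ 2) / (p * (p + 1 / Real.pi) + lam (n + 1) ^ 2) /
        (Real.exp (lam (n + 1) ^ 2 * x) + 1)) =
      1 / (4 * (1 + 1 / (Real.pi * p)))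
      + 1 / 2 * Real.sqrt (Real.pi / x) * (Real.sqrt 2 - 1) * (riemannZeta (1 / 2)).re
      + Real.sqrt (Real.pi / (2 * x)) *
          ∑' n : ℕ, Gfun p (Real.pi * (2 * (n + 1) - 1) / x) / Real.sqrt (2 * (n + 1) - 1) := by
  have h := tsum_gTerm hp hlam hx
  rw [integral_fermi_sq hx] at h
  have hw : lamTerm p x 0 = 1 / (2 * (1 + 1 / (Real.pi * p))) := by
    have hpi := Real.pi_pos
    simp only [lamTerm, ne_eq, OfNat.ofNat_ne_zero, not_false_eq_true, zero_pow, mul_zero,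
      Real.exp_zero, add_zero]
    field_simp
    norm_num
  have hs : ∑' n : ℕ, (p ^ 2 + lam (n + 1) ^ 2) / (p * (p + 1 / Real.pi) + lam (n + 1) ^ 2) /
      (Real.exp (lam (n + 1) ^ 2 * x) + 1) = ∑' n, lamTerm p x (lam (n + 1)) := by
    simp only [lamTerm, mul_comm x]
  have hg : Real.sqrt (Real.pi / (2 * x)) *
      ∑' n : ℕ, Gfun p (Real.pi * (2 * (n + 1) - 1) / x) / Real.sqrt (2 * (n + 1) - 1) =
      ∑' j, gTerm p x j := by
    simp only [gTerm, tsum_mul_left]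
  have hw2 : 1 / (4 * (1 + 1 / (Real.pi * p))) = lamTerm p x 0 / 2 := by
    rw [hw, div_div]; congr 1; ring
  rw [hs, hg, h, hw2]
  ring
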